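/- arXiv:2210.04487 — 3 statements merged into one kernel-verified Lean document; each statement's English description precedes it below -/
import Mathlib

section
/- Let F₄ = GF(4), let n be odd, let g₁, g₂ be monic divisors of Xⁿ−1 in F₄[X], and let ν ∈ F₄[X] with ν−1 coprime to Xⁿ−1. Assume: g₁ divides g₁^{⊥h}; g₂ divides g₂^{⊥h}; g₂ divides the remainder of (ν+ν̄)·g₁^{⊥h} modulo Xⁿ−1; g₁ divides the remainder of (ν·ν̄+1)·g₁^{⊥h} modulo Xⁿ−1; and g₂ divides the remainder of (ν·ν̄+1)·g₂^{⊥h} modulo Xⁿ−1. Then the code C ⊆ F₄^{2n}, defined as the F₄-span of all vectors ([a·ν·g₁]ₙ, [a·g₁]ₙ) and ([b·g₂]ₙ, [b·ν·g₂]ₙ) for a, b ∈ F₄[X], satisfies C^{⊥h} ⊆ C and has F₄-dimension 2n − deg g₁ − deg g₂. -/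
open Polynomial

set_option synthInstance.maxHeartbeats 1000000
set_option maxHeartbeats 1000000

noncomputable section

/-- The field `F₄ = GF(4)`. -/
abbrev F4 : Type := GaloisField 2 2

/-- The coefficient vector `[p]ₙ ∈ F₄ⁿ` of the remainder of `p` modulo `Xⁿ - 1`
(coefficient of `X^i` in position `i`). -/
def coeffVec (n : ℕ) (p : Polynomial F4) : Fin n → F4 :=
  fun i => (p % (X ^ n - 1)).coeff i

/-- The Hermitian inner product `⟨u,v⟩_h = ∑ i, u i * (v i)²` on `F₄^m`. -/
def hermInner {m : ℕ} (u v : Fin m → F4) : F4 := ∑ i, u i * (v i) ^ 2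

/-- The Hermitian inner product on `F₄ⁿ × F₄ⁿ`: the sum of the Hermitian inner
products of the two components. -/
def hermInner2 {n : ℕ} (u v : (Fin n → F4) × (Fin n → F4)) : F4 :=
  hermInner u.1 v.1 + hermInner u.2 v.2

/-- The conjugate transform `f̄ := f₀² + ∑_{i=1}^{n-1} f_i² X^{n-i}`, where `f` is first
reduced modulo `Xⁿ - 1`. -/
def conjT (n : ℕ) (f : Polynomial F4) : Polynomial F4 :=
  C (((f % (X ^ n - 1)).coeff 0) ^ 2) +
    ∑ i ∈ Finset.Ico 1 n, C (((f % (X ^ n - 1)).coeff i) ^ 2) * X ^ (n - i)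

/-- The Hermitian dual generator `g^{⊥h}(X) := ∑_{j=0}^{deg h} (h_j)² X^{deg h - j}`,
the conjugate reciprocal of the check polynomial `h = (Xⁿ-1)/g`. -/
def dualGen (n : ℕ) (g : Polynomial F4) : Polynomial F4 :=
  ∑ j ∈ Finset.range (((X ^ n - 1) / g).natDegree + 1),
    C ((((X ^ n - 1) / g).coeff j) ^ 2) * X ^ (((X ^ n - 1) / g).natDegree - j)

lemma hermInner_add_right {m : ℕ} (u v w : Fin m → F4) :
    hermInner u (v + w) = hermInner u v + hermInner u w := by
  simp only [hermInner, Pi.add_apply]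
  rw [← Finset.sum_add_distrib]
  refine Finset.sum_congr rfl fun i _ => ?_
  rw [add_pow_char (v i) (w i) 2, mul_add]

lemma hermInner_smul_right {m : ℕ} (c : F4) (u v : Fin m → F4) :
    hermInner u (c • v) = c ^ 2 * hermInner u v := by
  simp only [hermInner, Pi.smul_apply, smul_eq_mul, mul_pow, Finset.mul_sum]
  exact Finset.sum_congr rfl fun i _ => by ring

/-- The Hermitian dual code `C^{⊥h} = {v | ∀ u ∈ C, ⟨u,v⟩_h = 0}` of a linear code in `F₄^m`. -/
def hermDual {m : ℕ} (Ccode : Submodule F4 (Fin m → F4)) : Submodule F4 (Fin m → F4) where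
  carrier := {v | ∀ u ∈ Ccode, hermInner u v = 0}
  zero_mem' := by intro u _; simp [hermInner]
  add_mem' := by
    intro v w hv hw u hu
    rw [hermInner_add_right, hv u hu, hw u hu, add_zero]
  smul_mem' := by
    intro c v hv u hu
    rw [hermInner_smul_right, hv u hu, mul_zero]

lemma hermInner2_add_right {n : ℕ} (u v w : (Fin n → F4) × (Fin n → F4)) :
    hermInner2 u (v + w) = hermInner2 u v + hermInner2 u w := by
  simp only [hermInner2, Prod.fst_add, Prod.snd_add, hermInner_add_right]
  ring

lemma hermInner2_smul_right {n : ℕ} (c : F4) (u v : (Fin n → F4) × (Fin n → F4)) :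
    hermInner2 u (c • v) = c ^ 2 * hermInner2 u v := by
  simp only [hermInner2, Prod.smul_fst, Prod.smul_snd, hermInner_smul_right]
  ring

/-- The Hermitian dual code of a linear code in `F₄ⁿ × F₄ⁿ` (identified with `F₄^{2n}`). -/
def hermDualPair {n : ℕ} (Ccode : Submodule F4 ((Fin n → F4) × (Fin n → F4))) :
    Submodule F4 ((Fin n → F4) × (Fin n → F4)) where
  carrier := {v | ∀ u ∈ Ccode, hermInner2 u v = 0}
  zero_mem' := by intro u _; simp [hermInner2, hermInner]
  add_mem' := by
    intro v w hv hw u hu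
    rw [hermInner2_add_right, hv u hu, hw u hu, add_zero]
  smul_mem' := by
    intro c v hv u hu
    rw [hermInner2_smul_right, hv u hu, mul_zero]

/-- Hamming weight of a vector. -/
def hammingWt {m : ℕ} (u : Fin m → F4) : ℕ := Nat.card {i : Fin m // u i ≠ 0}

/-- The 2-generator quasi-cyclic code `C(g₁,g₂,ν)` of length `2n` and index 2:
the `F₄`-span of all `([a·ν·g₁]ₙ, [a·g₁]ₙ)` and `([b·g₂]ₙ, [b·ν·g₂]ₙ)`. -/
def Cqc (n : ℕ) (g₁ g₂ ν : Polynomial F4) : Submodule F4 ((Fin n → F4) × (Fin n → F4)) :=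
  Submodule.span F4
    ({x | ∃ a : Polynomial F4, x = (coeffVec n (a * ν * g₁), coeffVec n (a * g₁))} ∪
     {x | ∃ b : Polynomial F4, x = (coeffVec n (b * g₂), coeffVec n (b * ν * g₂))})

/-- The quasi-cyclic code `D`: the `F₄`-span of all `([-ν̄·c·g₁^{⊥h}]ₙ, [c·g₁^{⊥h}]ₙ)`
and `([s·g₂^{⊥h}]ₙ, [-ν̄·s·g₂^{⊥h}]ₙ)`. -/
def Dqc (n : ℕ) (g₁ g₂ ν : Polynomial F4) : Submodule F4 ((Fin n → F4) × (Fin n → F4)) :=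
  Submodule.span F4
    ({x | ∃ c : Polynomial F4,
        x = (coeffVec n (-(conjT n ν) * c * dualGen n g₁), coeffVec n (c * dualGen n g₁))} ∪
     {x | ∃ s : Polynomial F4,
        x = (coeffVec n (s * dualGen n g₂), coeffVec n (-(conjT n ν) * s * dualGen n g₂))})

/-- The quotient ring `R = F₄[X]/(Xⁿ - 1)`. -/
abbrev Rng (n : ℕ) : Type := Polynomial F4 ⧸ Ideal.span ({X ^ n - 1} : Set (Polynomial F4))

/-- The natural projection `F₄[X] → R`. -/
def toRng (n : ℕ) : Polynomial F4 →+* Rng n := Ideal.Quotient.mk _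

/-- The `R`-linear map `R → R × R`, `a ↦ (a·û, a·v̂)`, where `û, v̂` are the images of
`u, v` in `R`. -/
def qcMap (n : ℕ) (u v : Polynomial F4) : Rng n →ₗ[Rng n] Rng n × Rng n :=
  (LinearMap.toSpanSingleton (Rng n) (Rng n) (toRng n u)).prod
    (LinearMap.toSpanSingleton (Rng n) (Rng n) (toRng n v))

/-!
Over `R = F₄[X]/(Xⁿ - 1)` the code is the image of `(g₁) × (g₂)` under the matrix
`M = [[ν, 1], [1, ν]]`, which is invertible because in characteristic two its determinant is
`ν² - 1 = (ν - 1)²`; this gives the dimension.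

With the involution `∑ aᵢ Xⁱ ↦ ∑ aᵢ² X⁻ⁱ` on `R`, the Hermitian inner product of the coefficient
vectors of `a` and `b` is the constant coefficient of `a b̄`. Since the code is an `R`-module, a
vector `v = (U, V)` orthogonal to it is orthogonal for the `R`-valued form `∑ uᵢ v̄ᵢ` as well.
As the annihilator of `gᵢ` is generated by `hᵢ = (Xⁿ - 1) / gᵢ`, this puts `M̄ v` into
`(h̄₁) × (h̄₂)`, and `gᵢ^{⊥h}` is a unit times `h̄ᵢ`. The three divisibility hypotheses, and the
conjugate of the first, say that the entries of `adj(M) adj(M̄)` map `(h̄₁) × (h̄₂)` into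
`(g₁) × (g₂)`, so `M⁻¹ v ∈ (g₁) × (g₂)`.
-/

section ExactPair

/-- An *exact pair* of elements of a commutative ring: each of the two generates the annihilator of
the other. The images of `g` and of its check polynomial `(Xⁿ - 1) / g` in `F₄[X]/(Xⁿ - 1)` are the
example of interest. -/
structure IsExactPair {R : Type*} [CommRing R] (g h : R) : Prop where
  mul_eq_zero_iff_left : ∀ x, g * x = 0 ↔ h ∣ x
  mul_eq_zero_iff_right : ∀ x, h * x = 0 ↔ g ∣ x

lemma isExactPair_mk {A : Type*} [CommRing A] [IsDomain A] {f g h : A} (hf : f ≠ 0)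
    (hgh : g * h = f) :
    IsExactPair (Ideal.Quotient.mk (Ideal.span {f}) g) (Ideal.Quotient.mk (Ideal.span {f}) h) := by
  have key : ∀ {a b : A}, a * b = f → ∀ x : A ⧸ Ideal.span {f},
      Ideal.Quotient.mk _ a * x = 0 ↔ Ideal.Quotient.mk _ b ∣ x := by
    intro a b hab x
    have ha : a ≠ 0 := left_ne_zero_of_mul (hab ▸ hf)
    obtain ⟨p, rfl⟩ := Ideal.Quotient.mk_surjective x
    constructor
    · intro h
      rw [← map_mul, Ideal.Quotient.eq_zero_iff_dvd, ← hab, mul_dvd_mul_iff_left ha] at h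
      exact map_dvd _ h
    · rintro ⟨y, hy⟩
      rw [hy, ← mul_assoc, ← map_mul, hab,
        (Ideal.Quotient.eq_zero_iff_dvd f f).2 dvd_rfl, zero_mul]
  exact ⟨key hgh, key (mul_comm g h ▸ hgh)⟩

lemma IsExactPair.dvd_mul_star {R : Type*} [CommRing R] [StarRing R] {g₁ h₁ g₂ h₂ c : R}
    (e₁ : IsExactPair g₁ h₁) (e₂ : IsExactPair g₂ h₂) (hc : IsSelfAdjoint c)
    (h : g₂ ∣ c * star h₁) : g₁ ∣ c * star h₂ := by
  rw [← e₂.mul_eq_zero_iff_right] at h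
  rw [← e₁.mul_eq_zero_iff_right]
  calc h₁ * (c * star h₂) = star (h₂ * (c * star h₁)) := by
        simp only [star_mul', star_star, hc.star_eq]; ring
    _ = 0 := by rw [h, star_zero]

end ExactPair

section QuasiCyclic

variable {R : Type*} [CommRing R]

/-- The endomorphism of `R²` with matrix `[[ν, 1], [1, ν]]`. -/
def twist (ν : R) : R × R →ₗ[R] R × R :=
  (ν • LinearMap.fst R R R + LinearMap.snd R R R).prod
    (LinearMap.fst R R R + ν • LinearMap.snd R R R)

@[simp]
lemma twist_apply (ν : R) (x : R × R) : twist ν x = (ν * x.1 + x.2, x.1 + ν * x.2) := rfl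

lemma twist_injective {ν : R} (hν : IsUnit (ν ^ 2 - 1)) : Function.Injective (twist ν) := by
  rw [injective_iff_map_eq_zero]
  rintro ⟨x, y⟩ h
  rw [twist_apply, Prod.mk_eq_zero] at h
  obtain ⟨h₁, h₂⟩ := h
  dsimp only at h₁ h₂
  refine Prod.mk_eq_zero.2 ⟨hν.mul_right_eq_zero.1 ?_, hν.mul_right_eq_zero.1 ?_⟩
  · linear_combination ν * h₁ - h₂
  · linear_combination ν * h₂ - h₁

/-- The 2-generator quasi-cyclic code over `R`, the `R`-span of `(ν g₁, g₁)` and `(g₂, ν g₂)`,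
written as the image of `(g₁) × (g₂)` under `twist ν`. -/
def quasiCyclic (g₁ g₂ ν : R) : Submodule R (R × R) :=
  Submodule.map (twist ν) (Submodule.prod (Ideal.span {g₁}) (Ideal.span {g₂}))

lemma mem_quasiCyclic {g₁ g₂ ν : R} {u : R × R} :
    u ∈ quasiCyclic g₁ g₂ ν ↔ ∃ x y, twist ν (g₁ * x, g₂ * y) = u := by
  constructor
  · rintro ⟨⟨_, _⟩, ⟨hx, hy⟩, rfl⟩
    obtain ⟨x, rfl⟩ := Ideal.mem_span_singleton.1 hx
    obtain ⟨y, rfl⟩ := Ideal.mem_span_singleton.1 hy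
    exact ⟨x, y, rfl⟩
  · rintro ⟨x, y, rfl⟩
    exact Submodule.mem_map_of_mem ⟨Ideal.mem_span_singleton.2 (dvd_mul_right g₁ x),
      Ideal.mem_span_singleton.2 (dvd_mul_right g₂ y)⟩

lemma mem_quasiCyclic_of_dvd {g₁ g₂ ν U V : R} (hν : IsUnit (ν ^ 2 - 1))
    (h₁ : g₁ ∣ ν * U - V) (h₂ : g₂ ∣ ν * V - U) : (U, V) ∈ quasiCyclic g₁ g₂ ν := by
  obtain ⟨δ, hδ⟩ := hν.exists_left_inv
  obtain ⟨x, hx⟩ := h₁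
  obtain ⟨y, hy⟩ := h₂
  refine mem_quasiCyclic.2 ⟨δ * x, δ * y, ?_⟩
  rw [twist_apply, Prod.mk.injEq]
  constructor
  · linear_combination U * hδ - δ * ν * hx - δ * hy
  · linear_combination V * hδ - δ * hx - δ * ν * hy

-- With `M` the matrix of `twist`, this is the first row of
-- `adj (M ν) * adj (M μ) = [[ν * μ + 1, -(ν + μ)], [-(ν + μ), ν * μ + 1]]`.
lemma dvd_mul_sub_of_dvd {g k l ν μ U V : R} (hμ : IsUnit (μ ^ 2 - 1))
    (hk : k ∣ μ * U + V) (hl : l ∣ U + μ * V)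
    (hgk : g ∣ (ν * μ + 1) * k) (hgl : g ∣ (ν + μ) * l) : g ∣ ν * U - V := by
  have h : g ∣ (ν * μ + 1) * (μ * U + V) - (ν + μ) * (U + μ * V) :=
    dvd_sub (hgk.trans (mul_dvd_mul_left _ hk)) (hgl.trans (mul_dvd_mul_left _ hl))
  rw [← hμ.dvd_mul_left]
  convert! h using 1
  ring

lemma mem_quasiCyclic_of_orthogonal [StarRing R] {g₁ h₁ g₂ h₂ ν U V : R}
    (e₁ : IsExactPair g₁ h₁) (e₂ : IsExactPair g₂ h₂) (hν : IsUnit (ν ^ 2 - 1))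
    (h₂₁ : g₂ ∣ (ν + star ν) * star h₁) (h₁₁ : g₁ ∣ (ν * star ν + 1) * star h₁)
    (h₂₂ : g₂ ∣ (ν * star ν + 1) * star h₂)
    (horth : ∀ u ∈ quasiCyclic g₁ g₂ ν, u.1 * star U + u.2 * star V = 0) :
    (U, V) ∈ quasiCyclic g₁ g₂ ν := by
  have hν' : IsUnit (star ν ^ 2 - 1) := by simpa using hν.star
  have h₁₂ : g₁ ∣ (ν + star ν) * star h₂ :=
    e₁.dvd_mul_star e₂ (IsSelfAdjoint.add_star_self ν) h₂₁
  have hU : star h₁ ∣ star ν * U + V := by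
    have h : h₁ ∣ ν * star U + star V := by
      have h := horth _ (mem_quasiCyclic.2 ⟨1, 0, rfl⟩)
      simp only [twist_apply, mul_one, mul_zero, add_zero] at h
      rw [← e₁.mul_eq_zero_iff_left]
      linear_combination h
    simpa [starRingEnd_apply] using map_dvd (starRingEnd R) h
  have hV : star h₂ ∣ U + star ν * V := by
    have h : h₂ ∣ star U + ν * star V := by
      have h := horth _ (mem_quasiCyclic.2 ⟨0, 1, rfl⟩)
      simp only [twist_apply, mul_one, mul_zero, zero_add] at h
      rw [← e₂.mul_eq_zero_iff_left]
      linear_combination h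
    simpa [starRingEnd_apply] using map_dvd (starRingEnd R) h
  refine mem_quasiCyclic_of_dvd hν (dvd_mul_sub_of_dvd hν' hU hV h₁₁ h₁₂)
    (dvd_mul_sub_of_dvd hν' ?_ ?_ h₂₂ h₂₁)
  · rwa [add_comm]
  · rwa [add_comm]

end QuasiCyclic

section Dimension

variable {K : Type*} [Field K]

lemma finrank_submodule_prod {M N : Type*} [AddCommGroup M] [AddCommGroup N] [Module K M]
    [Module K N] [Module.Finite K M] [Module.Finite K N] (p : Submodule K M) (q : Submodule K N) :
    Module.finrank K (p.prod q) = Module.finrank K p + Module.finrank K q := by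
  rw [← Module.finrank_prod]
  exact LinearEquiv.finrank_eq
    { Equiv.Set.prod (p : Set M) (q : Set N) with
      map_add' := fun _ _ => rfl
      map_smul' := fun _ _ => rfl }

lemma finrank_quasiCyclic {R : Type*} [CommRing R] [Algebra K R] [Module.Finite K R]
    (g₁ g₂ : R) {ν : R} (hν : IsUnit (ν ^ 2 - 1)) :
    Module.finrank K (quasiCyclic g₁ g₂ ν) =
      Module.finrank K (Ideal.span {g₁}) + Module.finrank K (Ideal.span {g₂}) := by
  rw [quasiCyclic,
    ← ((Submodule.equivMapOfInjective _ (twist_injective hν) _).restrictScalars K).finrank_eq]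
  exact finrank_submodule_prod ((Ideal.span {g₁}).restrictScalars K)
    ((Ideal.span {g₂}).restrictScalars K)

lemma finrank_span_mk_of_dvd {f g : K[X]} (hf : f ≠ 0) (hg : g ∣ f) :
    Module.finrank K (Ideal.span {Ideal.Quotient.mk (Ideal.span {f}) g}) =
      f.natDegree - g.natDegree := by
  have : Module.Finite K (K[X] ⧸ Ideal.span {f}) := (AdjoinRoot.powerBasis hf).finite
  have hle : Ideal.span {f} ≤ Ideal.span {g} := Ideal.span_singleton_le_span_singleton.2 hg
  have hmap : (Ideal.span {g}).map (Ideal.Quotient.mkₐ K (Ideal.span {f})) =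
      Ideal.span {Ideal.Quotient.mk (Ideal.span {f}) g} := by
    rw [Ideal.map_span, Set.image_singleton, Ideal.Quotient.mkₐ_eq_mk]
  have hquot := (DoubleQuot.quotQuotEquivQuotOfLEₐ K hle).toLinearEquiv.finrank_eq
  rw [hmap, finrank_quotient_span_eq_natDegree] at hquot
  have hadd := Submodule.finrank_quotient_add_finrank
    ((Ideal.span {Ideal.Quotient.mk (Ideal.span {f}) g}).restrictScalars K)
  rw [finrank_quotient_span_eq_natDegree] at hadd
  exact Nat.eq_sub_of_add_eq' (hquot ▸ hadd)

end Dimension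

section CyclicAlgebra

variable (n : ℕ)

/-- The class of `X` in `F₄[X]/(Xⁿ - 1)`; multiplication by it is the cyclic shift. -/
def root : Rng n := toRng n X

lemma root_pow_self : root n ^ n = 1 := by
  have h : toRng n (X ^ n - 1) = 0 := (Ideal.Quotient.eq_zero_iff_dvd _ _).2 dvd_rfl
  rwa [map_sub, map_pow, map_one, sub_eq_zero] at h

lemma toRng_mod (p : F4[X]) : toRng n (p % (X ^ n - 1)) = toRng n p := by
  rw [toRng, Ideal.Quotient.mk_eq_mk_iff_sub_mem, Ideal.mem_span_singleton]
  exact ⟨-(p / (X ^ n - 1)), by linear_combination EuclideanDomain.mod_add_div p (X ^ n - 1)⟩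

lemma toRng_smul (c : F4) (p : F4[X]) : toRng n (c • p) = c • toRng n p := rfl

lemma natDegree_X_pow_sub_one : (X ^ n - 1 : F4[X]).natDegree = n := natDegree_X_pow_sub_C

lemma finrank_Rng : Module.finrank F4 (Rng n) = n :=
  finrank_quotient_span_eq_natDegree.trans (natDegree_X_pow_sub_one n)

variable {n} in
lemma isUnit_toRng_sq_sub_one {ν : F4[X]} (h : IsCoprime (ν - 1) (X ^ n - 1)) :
    IsUnit (toRng n ν ^ 2 - 1) := by
  have hunit := h.map (toRng n)
  rw [map_sub (toRng n) (X ^ n), map_pow, ← root, root_pow_self, map_one, sub_self,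
    isCoprime_zero_right] at hunit
  have hsq : ν ^ 2 - 1 = (ν - 1) ^ 2 := by rw [sub_pow_char (p := 2), one_pow]
  rw [← map_one (toRng n), ← map_pow, ← map_sub, hsq, map_pow]
  exact hunit.pow 2

variable {n} in
lemma toRng_eq_sum {p : F4[X]} {N : ℕ} (hp : p.natDegree < N) :
    toRng n p = ∑ i ∈ Finset.range N, p.coeff i • root n ^ i := by
  conv_lhs => rw [p.as_sum_range_C_mul_X_pow' hp]
  simp only [map_sum, map_pow, root, ← smul_eq_C_mul, toRng_smul]

variable [NeZero n]

lemma X_pow_sub_one_ne_zero : (X ^ n - 1 : F4[X]) ≠ 0 := by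
  simpa using X_pow_sub_C_ne_zero (NeZero.pos n) (1 : F4)

variable {n} in
lemma isExactPair_toRng {g : F4[X]} (hg : g ∣ X ^ n - 1) :
    IsExactPair (toRng n g) (toRng n ((X ^ n - 1) / g)) :=
  have hX := X_pow_sub_one_ne_zero n
  isExactPair_mk hX (EuclideanDomain.mul_div_cancel' (ne_zero_of_dvd_ne_zero hX hg) hg)

lemma natDegree_mod_X_pow_sub_one_lt (p : F4[X]) : (p % (X ^ n - 1)).natDegree < n := by
  have hdeg := natDegree_X_pow_sub_one n
  exact (natDegree_mod_lt p (by rw [hdeg]; exact NeZero.ne n)).trans_eq hdeg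

lemma toRng_eq_sum_coeffVec (p : F4[X]) :
    toRng n p = ∑ i, coeffVec n p i • root n ^ (i : ℕ) := by
  rw [← toRng_mod, toRng_eq_sum (natDegree_mod_X_pow_sub_one_lt n p), Finset.sum_range]
  rfl

/-- The basis `1, X, …, Xⁿ⁻¹` of `F₄[X]/(Xⁿ - 1)`. -/
def rootBasis : Module.Basis (Fin n) F4 (Rng n) :=
  basisOfTopLeSpanOfCardEqFinrank (fun i => root n ^ (i : ℕ))
    (fun a _ => by
      obtain ⟨p, rfl⟩ := Ideal.Quotient.mk_surjective a
      change toRng n p ∈ _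
      rw [toRng_eq_sum_coeffVec]
      exact Submodule.sum_smul_mem _ _ fun i _ => Submodule.subset_span ⟨i, rfl⟩)
    (by rw [Fintype.card_fin, finrank_Rng])

lemma rootBasis_apply (i : Fin n) : rootBasis n i = root n ^ (i : ℕ) := by
  simp [rootBasis]

/-- The identification of the cyclic algebra with `F₄ⁿ`, sending the class of `p` to `[p]ₙ`. -/
def coeffEquiv : Rng n ≃ₗ[F4] (Fin n → F4) := (rootBasis n).equivFun

lemma coeffEquiv_toRng (p : F4[X]) : coeffEquiv n (toRng n p) = coeffVec n p := by
  rw [coeffEquiv, ← LinearEquiv.eq_symm_apply, Module.Basis.equivFun_symm_apply,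
    toRng_eq_sum_coeffVec]
  simp only [rootBasis_apply]

lemma sum_coeffEquiv_smul_root_pow (a : Rng n) : ∑ i, coeffEquiv n a i • root n ^ (i : ℕ) = a := by
  simpa only [coeffEquiv, rootBasis_apply] using (rootBasis n).sum_equivFun a

lemma coeffEquiv_root_pow (i j : Fin n) :
    coeffEquiv n (root n ^ (i : ℕ)) j = if i = j then 1 else 0 := by
  rw [← rootBasis_apply, coeffEquiv, Module.Basis.equivFun_self]

instance : Module.Finite F4 (Rng n) := Module.Finite.of_basis (rootBasis n)

end CyclicAlgebra

section Conjugation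

variable (n : ℕ)

lemma F4.sq_sq (a : F4) : (a ^ 2) ^ 2 = a := by
  have := Fintype.ofFinite F4
  have h := FiniteField.pow_card a
  rwa [Fintype.card_eq_nat_card, GaloisField.card 2 2 two_ne_zero, pow_two 2, pow_mul] at h

/-- The conjugation `∑ aᵢ Xⁱ ↦ ∑ aᵢ² X⁻ⁱ` of `F₄[X]/(Xⁿ - 1)`, where `X⁻¹ = Xⁿ⁻¹`. -/
def conj : Rng n →+* Rng n :=
  Ideal.Quotient.lift _
    (eval₂RingHom ((algebraMap F4 (Rng n)).comp (frobenius F4 2)) (root n ^ (n - 1))) <| by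
    intro p hp
    obtain ⟨q, rfl⟩ := Ideal.mem_span_singleton.1 hp
    rw [map_mul, map_sub, map_pow, map_one, coe_eval₂RingHom, eval₂_X, pow_right_comm,
      root_pow_self, one_pow, sub_self, zero_mul]

lemma conj_root : conj n (root n) = root n ^ (n - 1) := eval₂_X _ _

lemma conj_toRng_C (c : F4) : conj n (toRng n (C c)) = toRng n (C (c ^ 2)) := eval₂_C _ _

lemma conj_smul (c : F4) (a : Rng n) : conj n (c • a) = c ^ 2 • conj n a := by
  obtain ⟨p, rfl⟩ := Ideal.Quotient.mk_surjective a
  change conj n (toRng n (c • p)) = c ^ 2 • conj n (toRng n p)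
  rw [smul_eq_C_mul, map_mul, map_mul, conj_toRng_C]
  exact (Algebra.smul_def (c ^ 2) (conj n (toRng n p))).symm

variable [NeZero n]

lemma root_mul_root_pow_sub_one : root n * root n ^ (n - 1) = 1 := by
  rw [mul_pow_sub_one (NeZero.ne n), root_pow_self]

lemma conj_conj (a : Rng n) : conj n (conj n a) = a := by
  suffices h : (conj n).comp (conj n) = RingHom.id (Rng n) from RingHom.congr_fun h a
  refine Ideal.Quotient.ringHom_ext (Polynomial.ringHom_ext (fun c => ?_) ?_)
  · change conj n (conj n (toRng n (C c))) = toRng n (C c)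
    rw [conj_toRng_C, conj_toRng_C, F4.sq_sq]
  · change conj n (conj n (root n)) = root n
    have h := root_mul_root_pow_sub_one n
    have h' := congrArg (conj n) h
    rw [map_mul, map_pow, map_one, conj_root] at h'
    rw [conj_root, map_pow, conj_root]
    linear_combination root n * h' - (root n ^ (n - 1)) ^ (n - 1) * h

instance : StarRing (Rng n) where
  star := conj n
  star_involutive := conj_conj n
  star_mul a b := by rw [map_mul, mul_comm]
  star_add := map_add (conj n)

lemma root_mul_star_root : root n * star (root n) = 1 :=
  (congrArg (root n * ·) (conj_root n)).trans (root_mul_root_pow_sub_one n)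

lemma isUnit_root : IsUnit (root n) := .of_mul_eq_one _ (root_mul_star_root n)

variable {n}

lemma star_smul_eq_sq_smul (c : F4) (a : Rng n) : star (c • a) = c ^ 2 • star a := conj_smul n c a

lemma root_pow_mul_star_root_pow {i j : ℕ} (h : j ≤ i) :
    root n ^ i * star (root n ^ j) = root n ^ (i - j) := by
  obtain ⟨k, rfl⟩ := Nat.exists_eq_add_of_le' h
  rw [Nat.add_sub_cancel, pow_add, star_pow, mul_assoc, ← mul_pow, root_mul_star_root, one_pow,
    mul_one]

lemma star_root_pow {i : ℕ} (h : i ≤ n) : star (root n ^ i) = root n ^ (n - i) := by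
  rw [← root_pow_mul_star_root_pow h, root_pow_self, one_mul]

lemma star_toRng_eq_sum {p : F4[X]} {N : ℕ} (hp : p.natDegree < N) :
    star (toRng n p) = ∑ i ∈ Finset.range N, p.coeff i ^ 2 • star (root n ^ i) := by
  rw [toRng_eq_sum hp, star_sum]
  simp only [star_smul_eq_sq_smul]

lemma toRng_conjT (f : F4[X]) : toRng n (conjT n f) = star (toRng n f) := by
  rw [← toRng_mod n f, star_toRng_eq_sum (natDegree_mod_X_pow_sub_one_lt n f),
    Finset.range_eq_Ico, Finset.sum_eq_sum_Ico_succ_bot (NeZero.pos n), conjT, map_add, map_sum,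
    pow_zero, star_one]
  congr 1
  · exact Algebra.algebraMap_eq_smul_one (A := Rng n) (_ : F4)
  · refine Finset.sum_congr rfl fun i hi => ?_
    rw [← smul_eq_C_mul, toRng_smul, map_pow, star_root_pow (Finset.mem_Ico.1 hi).2.le, root]

lemma toRng_dualGen (g : F4[X]) :
    toRng n (dualGen n g) =
      root n ^ ((X ^ n - 1) / g).natDegree * star (toRng n ((X ^ n - 1) / g)) := by
  rw [star_toRng_eq_sum (Nat.lt_succ_self _), dualGen, map_sum, Finset.mul_sum]
  refine Finset.sum_congr rfl fun j hj => ?_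
  rw [← smul_eq_C_mul, toRng_smul, map_pow, mul_smul_comm,
    root_pow_mul_star_root_pow (Finset.mem_range_succ_iff.1 hj), root]

lemma toRng_dvd_mul_star_of_dvd_mul_dualGen {g g' c : F4[X]}
    (h : g ∣ (c * dualGen n g') % (X ^ n - 1)) :
    toRng n g ∣ toRng n c * star (toRng n ((X ^ n - 1) / g')) := by
  have h' := map_dvd (toRng n) h
  rwa [toRng_mod, map_mul, toRng_dualGen, mul_left_comm,
    ((isUnit_root n).pow _).dvd_mul_left] at h'

end Conjugation

section HermitianForm

variable {n : ℕ} [NeZero n]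

lemma coeffEquiv_root_pow_mul_star_root_pow (i j : Fin n) :
    coeffEquiv n (root n ^ (i : ℕ) * star (root n ^ (j : ℕ))) 0 = if i = j then 1 else 0 := by
  rcases le_or_gt j i with h | h
  · rw [root_pow_mul_star_root_pow h]
    refine (coeffEquiv_root_pow n ⟨i - j, by omega⟩ 0).trans (if_congr ?_ rfl rfl)
    rw [Fin.ext_iff, Fin.ext_iff, Fin.val_zero]
    dsimp only
    omega
  · rw [star_root_pow j.2.le, ← pow_add]
    refine (coeffEquiv_root_pow n ⟨i + (n - j), by omega⟩ 0).trans (if_congr ?_ rfl rfl)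
    rw [Fin.ext_iff, Fin.ext_iff, Fin.val_zero]
    dsimp only
    omega

lemma hermInner_coeffEquiv (a b : Rng n) :
    hermInner (coeffEquiv n a) (coeffEquiv n b) = coeffEquiv n (a * star b) 0 := by
  conv_rhs =>
    rw [← sum_coeffEquiv_smul_root_pow n a, ← sum_coeffEquiv_smul_root_pow n b, star_sum,
      Finset.sum_mul_sum]
  simp only [star_smul_eq_sq_smul, smul_mul_smul_comm, map_sum, map_smul, Finset.sum_apply,
    Pi.smul_apply, coeffEquiv_root_pow_mul_star_root_pow, smul_eq_mul, mul_ite, mul_one, mul_zero,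
    Finset.sum_ite_eq, Finset.mem_univ, if_true, hermInner]

lemma eq_zero_of_coeffEquiv_mul_eq_zero {f : Rng n} (h : ∀ a, coeffEquiv n (a * f) 0 = 0) :
    f = 0 := by
  rw [← star_eq_zero, ← (coeffEquiv n).map_eq_zero_iff]
  funext i
  have hi := h ((coeffEquiv n).symm (Pi.single i 1))
  rw [← star_star f, ← hermInner_coeffEquiv, LinearEquiv.apply_symm_apply] at hi
  simpa [hermInner, Pi.single_apply] using hi

end HermitianForm

section Code

variable {n : ℕ} [NeZero n]

lemma coeffEquiv_prodCongr_twist (g₁ g₂ ν a b : F4[X]) :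
    (coeffEquiv n).prodCongr (coeffEquiv n)
        (twist (toRng n ν) (toRng n g₁ * toRng n a, toRng n g₂ * toRng n b)) =
      (coeffVec n (a * ν * g₁), coeffVec n (a * g₁)) +
        (coeffVec n (b * g₂), coeffVec n (b * ν * g₂)) := by
  simp only [← coeffEquiv_toRng, twist_apply, LinearEquiv.prodCongr_apply, Prod.mk_add_mk,
    ← map_add, ← map_mul]
  ring_nf

variable (n) in
lemma Cqc_eq_map (g₁ g₂ ν : F4[X]) :
    Cqc n g₁ g₂ ν =
      ((quasiCyclic (toRng n g₁) (toRng n g₂) (toRng n ν)).restrictScalars F4).map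
        ((coeffEquiv n).prodCongr (coeffEquiv n) : _ →ₗ[F4] _) := by
  refine le_antisymm (Submodule.span_le.2 ?_) ?_
  · rintro _ (⟨a, rfl⟩ | ⟨b, rfl⟩)
    · refine ⟨_, mem_quasiCyclic.2 ⟨toRng n a, toRng n 0, rfl⟩, ?_⟩
      refine (coeffEquiv_prodCongr_twist (n := n) g₁ g₂ ν a 0).trans ?_
      simp [← coeffEquiv_toRng]
    · refine ⟨_, mem_quasiCyclic.2 ⟨toRng n 0, toRng n b, rfl⟩, ?_⟩
      refine (coeffEquiv_prodCongr_twist (n := n) g₁ g₂ ν 0 b).trans ?_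
      simp [← coeffEquiv_toRng]
  · rintro _ ⟨_, hu, rfl⟩
    obtain ⟨x, y, rfl⟩ := mem_quasiCyclic.1 hu
    obtain ⟨a, rfl⟩ := Ideal.Quotient.mk_surjective x
    obtain ⟨b, rfl⟩ := Ideal.Quotient.mk_surjective y
    exact (coeffEquiv_prodCongr_twist (n := n) g₁ g₂ ν a b).symm ▸
      add_mem (Submodule.subset_span (.inl ⟨a, rfl⟩)) (Submodule.subset_span (.inr ⟨b, rfl⟩))

variable (n) in
lemma finrank_Cqc {g₁ g₂ ν : F4[X]} (hg₁ : g₁ ∣ X ^ n - 1) (hg₂ : g₂ ∣ X ^ n - 1)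
    (hν : IsCoprime (ν - 1) (X ^ n - 1)) :
    Module.finrank F4 (Cqc n g₁ g₂ ν) = 2 * n - g₁.natDegree - g₂.natDegree := by
  have hX := X_pow_sub_one_ne_zero n
  have hdeg : ∀ {g : F4[X]}, g ∣ X ^ n - 1 → g.natDegree ≤ n := fun hg =>
    (natDegree_le_of_dvd hg hX).trans_eq (natDegree_X_pow_sub_one n)
  calc Module.finrank F4 (Cqc n g₁ g₂ ν)
      = Module.finrank F4 (quasiCyclic (toRng n g₁) (toRng n g₂) (toRng n ν)) := by
        rw [Cqc_eq_map]
        exact LinearEquiv.finrank_map_eq ((coeffEquiv n).prodCongr (coeffEquiv n))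
          ((quasiCyclic (toRng n g₁) (toRng n g₂) (toRng n ν)).restrictScalars F4)
    _ = (n - g₁.natDegree) + (n - g₂.natDegree) := by
        rw [finrank_quasiCyclic _ _ (isUnit_toRng_sq_sub_one hν), toRng,
          finrank_span_mk_of_dvd hX hg₁, finrank_span_mk_of_dvd hX hg₂, natDegree_X_pow_sub_one]
    _ = 2 * n - g₁.natDegree - g₂.natDegree := by
        have h₁ := hdeg hg₁
        have h₂ := hdeg hg₂
        omega

lemma hermInner2_coeffEquiv (u v : Rng n × Rng n) :
    hermInner2 (coeffEquiv n u.1, coeffEquiv n u.2) (coeffEquiv n v.1, coeffEquiv n v.2) =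
      coeffEquiv n (u.1 * star v.1 + u.2 * star v.2) 0 := by
  rw [hermInner2, hermInner_coeffEquiv, hermInner_coeffEquiv, map_add, Pi.add_apply]

lemma orthogonal_of_mem_hermDualPair {g₁ g₂ ν : F4[X]} {U V : Rng n}
    (hv : (coeffEquiv n U, coeffEquiv n V) ∈ hermDualPair (Cqc n g₁ g₂ ν)) {u : Rng n × Rng n}
    (hu : u ∈ quasiCyclic (toRng n g₁) (toRng n g₂) (toRng n ν)) :
    u.1 * star U + u.2 * star V = 0 := by
  refine eq_zero_of_coeffEquiv_mul_eq_zero fun a => ?_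
  have hau : (coeffEquiv n (a * u.1), coeffEquiv n (a * u.2)) ∈ Cqc n g₁ g₂ ν := by
    rw [Cqc_eq_map]
    exact ⟨a • u, Submodule.smul_mem _ a hu, rfl⟩
  have h := hv _ hau
  rw [hermInner2_coeffEquiv (a * u.1, a * u.2) (U, V)] at h
  rw [← h, mul_add, mul_assoc, mul_assoc]

end Code

theorem C_dual_containing_general (n : ℕ) [NeZero n] (g₁ g₂ ν : F4[X])
    (hg₁d : g₁ ∣ X ^ n - 1) (hg₂d : g₂ ∣ X ^ n - 1) (hcop : IsCoprime (ν - 1) (X ^ n - 1))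
    (h3 : g₂ ∣ ((ν + conjT n ν) * dualGen n g₁) % (X ^ n - 1))
    (h4 : g₁ ∣ ((ν * conjT n ν + 1) * dualGen n g₁) % (X ^ n - 1))
    (h5 : g₂ ∣ ((ν * conjT n ν + 1) * dualGen n g₂) % (X ^ n - 1)) :
    hermDualPair (Cqc n g₁ g₂ ν) ≤ Cqc n g₁ g₂ ν ∧
      Module.finrank F4 (Cqc n g₁ g₂ ν) = 2 * n - g₁.natDegree - g₂.natDegree := by
  refine ⟨fun v hv => ?_, finrank_Cqc n hg₁d hg₂d hcop⟩
  obtain ⟨⟨U, V⟩, rfl⟩ := ((coeffEquiv n).prodCongr (coeffEquiv n)).surjective v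
  have hadd : toRng n (ν + conjT n ν) = toRng n ν + star (toRng n ν) := by
    rw [map_add, toRng_conjT]
  have hmul : toRng n (ν * conjT n ν + 1) = toRng n ν * star (toRng n ν) + 1 := by
    rw [map_add, map_mul, toRng_conjT, map_one]
  have hmem := mem_quasiCyclic_of_orthogonal (isExactPair_toRng hg₁d) (isExactPair_toRng hg₂d)
    (isUnit_toRng_sq_sub_one hcop)
    (hadd ▸ toRng_dvd_mul_star_of_dvd_mul_dualGen h3)
    (hmul ▸ toRng_dvd_mul_star_of_dvd_mul_dualGen h4)
    (hmul ▸ toRng_dvd_mul_star_of_dvd_mul_dualGen h5)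
    fun u hu => orthogonal_of_mem_hermDualPair hv hu
  rw [Cqc_eq_map]
  exact Submodule.mem_map_of_mem hmem

/-- The 2-generator quasi-cyclic code `C(g₁,g₂,ν)` is Hermitian dual-containing of
`F₄`-dimension `2n - deg g₁ - deg g₂`. -/
theorem C_dual_containing (n : ℕ) (hn : Odd n) (g₁ g₂ ν : Polynomial F4)
    (hg₁m : g₁.Monic) (hg₁d : g₁ ∣ X ^ n - 1)
    (hg₂m : g₂.Monic) (hg₂d : g₂ ∣ X ^ n - 1)
    (hcop : IsCoprime (ν - 1) (X ^ n - 1))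
    (h1 : g₁ ∣ dualGen n g₁)
    (h2 : g₂ ∣ dualGen n g₂)
    (h3 : g₂ ∣ ((ν + conjT n ν) * dualGen n g₁) % (X ^ n - 1))
    (h4 : g₁ ∣ ((ν * conjT n ν + 1) * dualGen n g₁) % (X ^ n - 1))
    (h5 : g₂ ∣ ((ν * conjT n ν + 1) * dualGen n g₂) % (X ^ n - 1)) :
    hermDualPair (Cqc n g₁ g₂ ν) ≤ Cqc n g₁ g₂ ν ∧
      Module.finrank F4 ↥(Cqc n g₁ g₂ ν) = 2 * n - g₁.natDegree - g₂.natDegree := by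
  have : NeZero n := ⟨hn.pos.ne'⟩
  exact C_dual_containing_general n g₁ g₂ ν hg₁d hg₂d hcop h3 h4 h5

end
end

section
/- There exists an F₄-linear code C ⊆ F₄^{42} of F₄-dimension 26 whose minimum Hamming distance is 9 and which contains its Hermitian dual: C^{⊥h} ⊆ C (hence C^{⊥h} is a Hermitian self-orthogonal [42,16] code). -/
open Polynomial

set_option synthInstance.maxHeartbeats 1000000
set_option maxHeartbeats 1000000

noncomputable section

/-!
The code is the kernel of `[1 | A]`, with `A` a `16 × 26` matrix over `𝔽₄` satisfying `A A† = 1`.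
As `1 + 1 = 0`, the rows of `[1 | A]` are Hermitian orthogonal, so the code contains its dual. The
code is quasi-cyclic: the shift by `2` of the `42` coordinates preserves it. The `21` translates of
the last `26` coordinates under this shift contain every coordinate `13` times, so a codeword of
weight at most `8` has, up to a shift, an information part of weight at most `⌊8 ⋅ 13 / 21⌋ = 4`.
It remains to inspect the information words of weight `1, …, 4`. There are about `1.3` million of
them; they are treated in parallel, as the bits of large natural numbers.
-/

open scoped Matrix

section ParityCheck

lemma exists_vecMul_eq_of_forall_dotProduct_eq_zero {K m n : Type*} [Field K] [Fintype m]
    [Fintype n] (H : Matrix m n K) (v : n → K) (hv : ∀ u, H *ᵥ u = 0 → u ⬝ᵥ v = 0) :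
    ∃ c, c ᵥ* H = v := by
  classical
  have hmem : dotProductEquiv K n v ∈ LinearMap.range H.mulVecLin.dualMap := by
    rw [LinearMap.range_dualMap_eq_dualAnnihilator_ker, Submodule.mem_dualAnnihilator]
    intro u hu
    rw [dotProductEquiv_apply_apply, dotProduct_comm, hv u hu]
  obtain ⟨f, hf⟩ := hmem
  obtain ⟨c, rfl⟩ := (dotProductEquiv K m).surjective f
  refine ⟨c, (dotProductEquiv K n).injective (LinearMap.ext fun u => ?_)⟩
  rw [← hf, dotProductEquiv_apply_apply, ← Matrix.dotProduct_mulVec]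
  rfl

lemma hermDual_ker_mulVecLin_le {r m : ℕ} {H : Matrix (Fin r) (Fin m) F4}
    (hH : H * (H.map (· ^ 2))ᵀ = 0) :
    hermDual (LinearMap.ker H.mulVecLin) ≤ LinearMap.ker H.mulVecLin := by
  intro v hv
  obtain ⟨c, hc⟩ := exists_vecMul_eq_of_forall_dotProduct_eq_zero H (v ^ 2) fun u hu => by
    simpa [hermInner, dotProduct] using hv u hu
  have hsq : (H *ᵥ v) ^ 2 = c ᵥ* (H * (H.map (· ^ 2))ᵀ) := by
    rw [← Matrix.vecMul_vecMul, hc, Matrix.vecMul_transpose]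
    ext i
    simp only [Pi.pow_apply, Matrix.mulVec, dotProduct, sum_pow_char, mul_pow, Matrix.map_apply]
  rw [hH, Matrix.vecMul_zero] at hsq
  exact pow_eq_zero_iff two_ne_zero |>.mp hsq

lemma mulVec_comp_iterate_eq_zero {R m n : Type*} [NonUnitalSemiring R] [Fintype m] [Fintype n]
    {H : Matrix m n R} {T : Matrix m m R} {e : Equiv.Perm n} (hT : T * H = H.submatrix id e.symm)
    {v : n → R} (hv : H *ᵥ v = 0) (t : ℕ) : H *ᵥ (v ∘ e^[t]) = 0 := by
  induction t with
  | zero => exact hv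
  | succ t ih =>
    calc H *ᵥ (v ∘ e^[t + 1]) = H.submatrix id e.symm *ᵥ (v ∘ e^[t]) := by
          rw [Matrix.submatrix_mulVec_equiv, Function.iterate_succ]
          rfl
      _ = 0 := by rw [← hT, ← Matrix.mulVec_mulVec, ih, Matrix.mulVec_zero]

end ParityCheck

section Systematic

/-- The matrix `[1 | A]`, the systematic parity-check matrix with check part `A`. -/
def systematic {K : Type*} [Zero K] [One K] {r k : ℕ} (A : Matrix (Fin r) (Fin k) K) :
    Matrix (Fin r) (Fin (r + k)) K :=
  (Matrix.fromCols 1 A).submatrix id finSumFinEquiv.symm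

variable {K : Type*} {r k : ℕ} (A : Matrix (Fin r) (Fin k) K)

lemma systematic_map {L : Type*} [Zero K] [One K] [Zero L] [One L] (f : K → L)
    (h0 : f 0 = 0) (h1 : f 1 = 1) :
    (systematic A).map f = systematic (A.map f) := by
  rw [systematic, ← Matrix.submatrix_map, Matrix.fromCols_map, Matrix.map_one f h0 h1, systematic]

lemma systematic_mulVec [Semiring K] (v : Fin (r + k) → K) :
    systematic A *ᵥ v = v ∘ Fin.castAdd k + A *ᵥ (v ∘ Fin.natAdd r) := by
  rw [systematic, Matrix.submatrix_mulVec_equiv, Matrix.fromCols_mulVec, Matrix.one_mulVec]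
  rfl

lemma systematic_mulVec_append_neg [Ring K] (w : Fin k → K) :
    systematic A *ᵥ Fin.append (-(A *ᵥ w)) w = 0 := by
  have hl : Fin.append (-(A *ᵥ w)) w ∘ Fin.castAdd k = -(A *ᵥ w) :=
    funext (Fin.append_left _ _)
  have hr : Fin.append (-(A *ᵥ w)) w ∘ Fin.natAdd r = w := funext (Fin.append_right _ _)
  rw [systematic_mulVec, hl, hr, neg_add_cancel]

lemma systematic_mul_transpose [Semiring K] (B : Matrix (Fin r) (Fin k) K) :
    systematic A * (systematic B)ᵀ = 1 + A * Bᵀ := by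
  rw [systematic, systematic, Matrix.transpose_submatrix, Matrix.submatrix_mul_equiv,
    Matrix.transpose_fromCols, Matrix.fromCols_mul_fromRows, Matrix.transpose_one, Matrix.one_mul,
    Matrix.submatrix_id_id]

lemma finrank_ker_systematic [Field K] :
    Module.finrank K (LinearMap.ker (systematic A).mulVecLin) = k := by
  have hsurj : LinearMap.range (systematic A).mulVecLin = ⊤ := by
    refine LinearMap.range_eq_top.mpr fun x => ⟨Fin.append x 0, ?_⟩
    rw [Matrix.mulVecLin_apply, systematic_mulVec]
    ext i
    simp [Matrix.mulVec, dotProduct]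
  have := LinearMap.finrank_range_add_finrank_ker (systematic A).mulVecLin
  rw [hsurj, finrank_top, Module.finrank_fin_fun, Module.finrank_fin_fun] at this
  lia

lemma hammingNorm_of_systematic_mulVec_eq_zero [Ring K] [DecidableEq K]
    {A : Matrix (Fin r) (Fin k) K} {v : Fin (r + k) → K} (hv : systematic A *ᵥ v = 0) :
    hammingNorm v = hammingNorm (A *ᵥ (v ∘ Fin.natAdd r)) + hammingNorm (v ∘ Fin.natAdd r) := by
  rw [systematic_mulVec, add_eq_zero_iff_neg_eq] at hv
  rw [← hv]
  simp only [hammingNorm, Finset.card_filter, Fin.sum_univ_add, Pi.neg_apply, neg_ne_zero,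
    Function.comp_apply]

end Systematic

section Model

/-- The field `𝔽₄ = 𝔽₂[ω]/(ω² + ω + 1)` with decidable arithmetic. -/
abbrev ModelF4 : Type := QuadraticAlgebra (ZMod 2) 1 1

instance : Fact (∀ x : ZMod 2, x ^ 2 ≠ 1 + 1 * x) := ⟨by decide⟩

instance : Finite ModelF4 := Module.finite_of_finite (ZMod 2)

lemma nonempty_modelF4_ringEquiv_F4 : Nonempty (ModelF4 ≃+* F4) := by
  have hcard : Nat.card ModelF4 = 2 ^ 2 := by
    rw [Module.natCard_eq_pow_finrank (K := ZMod 2), QuadraticAlgebra.finrank_eq_two,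
      Nat.card_zmod]
  exact ⟨(GaloisField.algEquivGaloisField 2 2 hcard).toRingEquiv⟩

namespace ModelF4

/-- The generator of `𝔽₄` over `𝔽₂`, a primitive third root of unity. -/
def ω : ModelF4 := ⟨0, 1⟩

lemma eq_zero_or_eq_one_or_eq_ω_or_eq_ω_sq : ∀ a : ModelF4, a = 0 ∨ a = 1 ∨ a = ω ∨ a = ω ^ 2 := by
  rintro ⟨x, y⟩
  revert x y
  decide

end ModelF4

end Model

section BitSlicing

open ModelF4

/-- The concatenation of the lowest `n` bits of `P` with the bits of `Q`. -/
def concatBits (n P Q : ℕ) : ℕ := P % 2 ^ n ||| Q <<< n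

lemma testBit_concatBits_of_lt {n s : ℕ} (hs : s < n) (P Q : ℕ) :
    (concatBits n P Q).testBit s = P.testBit s := by
  simp [concatBits, hs]

lemma testBit_concatBits_add (n P Q s : ℕ) :
    (concatBits n P Q).testBit (n + s) = Q.testBit s := by
  simp [concatBits]

/-- The number of words of weight `k` in `𝔽₄ⁿ`. -/
def numWords (n k : ℕ) : ℕ := n.choose k * 3 ^ k

lemma numWords_succ_succ (n k : ℕ) :
    numWords (n + 1) (k + 1) = 3 * numWords n k + numWords n (k + 1) := by
  rw [numWords, numWords, numWords, Nat.choose_succ_succ]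
  ring

/-- Adds the constant `re x` to each of the lowest `n` bits of `P`, read as elements of `𝔽₂`. -/
def addRe (n P : ℕ) (x : ModelF4) : ℕ := P ^^^ if x.re = 0 then 0 else 2 ^ n - 1

lemma decide_re_add_ne_zero (x y : ModelF4) :
    decide ((x + y).re ≠ 0) = (decide (x.re ≠ 0) ^^ decide (y.re ≠ 0)) := by
  have (c d : ZMod 2) : decide (c + d ≠ 0) = (decide (c ≠ 0) ^^ decide (d ≠ 0)) := by
    revert c d
    decide
  exact this x.re y.re

lemma testBit_addRe {n P s : ℕ} (hs : s < n) {x y : ModelF4}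
    (hP : P.testBit s = decide (y.re ≠ 0)) :
    (addRe n P x).testBit s = decide ((y + x).re ≠ 0) := by
  rw [addRe, Nat.testBit_xor, hP, decide_re_add_ne_zero]
  congr 1
  split_ifs with hx <;> simp only [hx, ne_eq, not_true_eq_false, not_false_eq_true, decide_true,
    decide_false, Nat.zero_testBit, Nat.testBit_two_pow_sub_one, hs]

/-- The values `re (w ⬝ᵥ r)`, for `w` running over all words of weight `k`, packed as the bits
of one number. The order of the words depends on `k` and `n` only. -/
def rePlane : (k : ℕ) → {n : ℕ} → (Fin n → ModelF4) → ℕ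
  | 0, _, _ => 0
  | _ + 1, 0, _ => 0
  | k + 1, n + 1, r =>
    let block (a : ModelF4) : ℕ := addRe (numWords n k) (rePlane k (Fin.tail r)) (a * r 0)
    concatBits (numWords n k) (block 1) <| concatBits (numWords n k) (block ω) <|
      concatBits (numWords n k) (block (ω ^ 2)) <| rePlane (k + 1) (Fin.tail r)

lemma hammingNorm_eq_tail_add {K : Type*} [Zero K] [DecidableEq K] {n : ℕ} (w : Fin (n + 1) → K) :
    hammingNorm w = hammingNorm (Fin.tail w) + if w 0 = 0 then 0 else 1 := by
  rw [hammingNorm, hammingNorm, Finset.card_filter, Finset.card_filter, Fin.sum_univ_succ,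
    Nat.add_comm, ite_not]
  rfl

lemma dotProduct_eq_tail_add {R : Type*} [NonUnitalNonAssocSemiring R] {n : ℕ}
    (v w : Fin (n + 1) → R) : v ⬝ᵥ w = Fin.tail v ⬝ᵥ Fin.tail w + v 0 * w 0 := by
  rw [dotProduct, Fin.sum_univ_succ, add_comm]
  rfl

lemma exists_testBit_rePlane {k n : ℕ} {w : Fin n → ModelF4} (hw : hammingNorm w = k) :
    ∃ s < numWords n k, ∀ r : Fin n → ModelF4,
      (rePlane k r).testBit s = decide ((w ⬝ᵥ r).re ≠ 0) := by
  induction n generalizing k with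
  | zero =>
    obtain rfl : k = 0 := by rw [← hw, hammingNorm_eq_zero]; exact Subsingleton.elim w 0
    exact ⟨0, by simp [numWords], fun r => by simp [rePlane]⟩
  | succ n ih =>
    cases k with
    | zero =>
      obtain rfl := hammingNorm_eq_zero.mp hw
      exact ⟨0, by simp [numWords], fun r => by simp [rePlane]⟩
    | succ k =>
      rw [hammingNorm_eq_tail_add] at hw
      by_cases h0 : w 0 = 0
      · obtain ⟨s, hs, h⟩ := ih (w := Fin.tail w) (k := k + 1) (by simpa [h0] using hw)
        refine ⟨numWords n k + (numWords n k + (numWords n k + s)), ?_, fun r => ?_⟩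
        · rw [numWords_succ_succ]
          lia
        · simp only [rePlane, testBit_concatBits_add, h, dotProduct_eq_tail_add, h0, zero_mul,
            add_zero]
      · obtain ⟨s, hs, h⟩ := ih (w := Fin.tail w) (k := k) (by simpa [h0] using hw)
        have hblock (a : ModelF4) (ha : w 0 = a) (r : Fin (n + 1) → ModelF4) :
            (addRe (numWords n k) (rePlane k (Fin.tail r)) (a * r 0)).testBit s
              = decide ((w ⬝ᵥ r).re ≠ 0) := by
          rw [dotProduct_eq_tail_add, ha, testBit_addRe hs (h _)]
        obtain h1 | hω | hω2 := (eq_zero_or_eq_one_or_eq_ω_or_eq_ω_sq (w 0)).resolve_left h0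
        · refine ⟨s, by rw [numWords_succ_succ]; lia, fun r => ?_⟩
          rw [rePlane, testBit_concatBits_of_lt hs, hblock 1 h1]
        · refine ⟨numWords n k + s, by rw [numWords_succ_succ]; lia, fun r => ?_⟩
          rw [rePlane, testBit_concatBits_add, testBit_concatBits_of_lt hs, hblock ω hω]
        · refine ⟨numWords n k + (numWords n k + s), by rw [numWords_succ_succ]; lia, fun r => ?_⟩
          rw [rePlane, testBit_concatBits_add, testBit_concatBits_add, testBit_concatBits_of_lt hs,
            hblock (ω ^ 2) hω2]

/-- The bits telling whether `w ⬝ᵥ r ≠ 0`, for `w` running over all words of weight `k`. -/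
def nonzeroPlane (k : ℕ) {n : ℕ} (r : Fin n → ModelF4) : ℕ := rePlane k r ||| rePlane k (ω • r)

lemma exists_testBit_nonzeroPlane {k n : ℕ} {w : Fin n → ModelF4} (hw : hammingNorm w = k) :
    ∃ s < numWords n k, ∀ r : Fin n → ModelF4,
      (nonzeroPlane k r).testBit s = decide (w ⬝ᵥ r ≠ 0) := by
  obtain ⟨s, hs, h⟩ := exists_testBit_rePlane hw
  refine ⟨s, hs, fun r => ?_⟩
  have hω (z : ModelF4) : (ω * z).re = z.im := by simp [ω]
  rw [nonzeroPlane, Nat.testBit_or, h, h, dotProduct_smul, smul_eq_mul, hω, ← Bool.decide_or]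
  simp [QuadraticAlgebra.ext_iff, imp_iff_not_or]

/-- The number whose bit `s` tells, for the bits `s` set in `m`, whether at least `t` of the
numbers in the list have bit `s` set. -/
def atLeast (m : ℕ) : (t : ℕ) → List ℕ → ℕ
  | 0, _ => m
  | _ + 1, [] => 0
  | t + 1, P :: Ps => (P &&& atLeast m t Ps) ||| atLeast m (t + 1) Ps

lemma testBit_atLeast {m s : ℕ} (hs : m.testBit s) (t : ℕ) (Ps : List ℕ) :
    (atLeast m t Ps).testBit s = decide (t ≤ Ps.countP (·.testBit s)) := by
  induction Ps generalizing t with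
  | nil => cases t <;> simp [atLeast, hs]
  | cons P Ps ih =>
    cases t with
    | zero => simp [atLeast, hs]
    | succ t =>
      rw [atLeast, Nat.testBit_or, Nat.testBit_and, ih, ih, List.countP_cons]
      cases P.testBit s with
      | false => simp
      | true =>
        simp only [Bool.true_and, if_true, add_le_add_iff_right, Bool.or_eq_left_iff_imp,
          decide_eq_true_eq]
        lia

lemma hammingNorm_eq_countP {K : Type*} [Zero K] [DecidableEq K] {n : ℕ} (w : Fin n → K) :
    hammingNorm w = (List.finRange n).countP (w · ≠ 0) := by
  simp [hammingNorm, Fin.univ_def, Finset.card, List.countP_eq_length_filter]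

lemma le_hammingNorm_mulVec {r n k t : ℕ} {A : Matrix (Fin r) (Fin n) ModelF4}
    (hA : atLeast (2 ^ numWords n k - 1) t
      ((List.finRange r).map fun i => nonzeroPlane k (A.row i)) = 2 ^ numWords n k - 1)
    {w : Fin n → ModelF4} (hw : hammingNorm w = k) : t ≤ hammingNorm (A *ᵥ w) := by
  obtain ⟨s, hs, hbit⟩ := exists_testBit_nonzeroPlane hw
  have hmask : (2 ^ numWords n k - 1).testBit s := by
    simpa [Nat.testBit_two_pow_sub_one] using hs
  have hcount := testBit_atLeast hmask t ((List.finRange r).map fun i => nonzeroPlane k (A.row i))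
  rw [hA, hmask, List.countP_map, Function.comp_def] at hcount
  simp only [hbit] at hcount
  simp only [hammingNorm_eq_countP, Matrix.mulVec, dotProduct_comm _ w]
  exact of_decide_eq_true hcount.symm

end BitSlicing

section MinimumDistance

lemma sum_hammingNorm_comp {K ι κ γ : Type*} [Zero K] [DecidableEq K] [Fintype ι] [DecidableEq ι]
    [Fintype κ] [Fintype γ] {σ : γ → κ → ι} {n : ℕ}
    (hσ : ∀ i, Finset.card {p : γ × κ | σ p.1 p.2 = i} = n) (v : ι → K) :
    ∑ c, hammingNorm (v ∘ σ c) = hammingNorm v * n := by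
  calc ∑ c, hammingNorm (v ∘ σ c)
      = Finset.card {p : γ × κ | v (σ p.1 p.2) ≠ 0} := by
        simp only [hammingNorm, Finset.card_filter, Fintype.sum_prod_type, Function.comp_apply]
    _ = ∑ i with v i ≠ 0, Finset.card {p : γ × κ | σ p.1 p.2 = i} := by
        rw [Finset.card_eq_sum_card_fiberwise (f := fun p => σ p.1 p.2) (t := {i | v i ≠ 0})
          fun p => by simp]
        refine Finset.sum_congr rfl fun i hi => ?_
        congr 1
        ext p
        grind
    _ = hammingNorm v * n := by
        rw [Finset.sum_congr rfl fun i _ => hσ i, Finset.sum_const, smul_eq_mul, hammingNorm]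

lemma exists_hammingNorm_comp_le {K ι κ γ : Type*} [Zero K] [DecidableEq K] [Fintype ι]
    [DecidableEq ι] [Fintype κ] [Fintype γ] {σ : γ → κ → ι} {n t : ℕ}
    (hσ : ∀ i, Finset.card {p : γ × κ | σ p.1 p.2 = i} = n) {v : ι → K}
    (hv : hammingNorm v * n < Fintype.card γ * (t + 1)) : ∃ c, hammingNorm (v ∘ σ c) ≤ t := by
  contrapose! hv
  rw [← sum_hammingNorm_comp hσ, ← smul_eq_mul, ← Finset.card_univ]
  exact Finset.card_nsmul_le_sum _ _ _ fun c _ => hv c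

lemma hammingNorm_comp_equiv {K ι : Type*} [Zero K] [DecidableEq K] [Fintype ι] (v : ι → K)
    (e : Equiv.Perm ι) : hammingNorm (v ∘ e) = hammingNorm v := by
  simp only [hammingNorm, Finset.card_filter, Function.comp_apply]
  exact Equiv.sum_comp e fun i => if v i ≠ 0 then 1 else 0

/-- The Brouwer–Zimmermann bound: by averaging, a short codeword is of low weight on one of the
translates of the information set, so it suffices to inspect information words of low weight. -/
lemma le_hammingNorm_of_iterate_cover {K : Type*} [Ring K] [DecidableEq K] {r k N n d t : ℕ}
    {A : Matrix (Fin r) (Fin k) K} {T : Matrix (Fin r) (Fin r) K} {e : Equiv.Perm (Fin (r + k))}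
    (hT : T * systematic A = (systematic A).submatrix id e.symm)
    (hcover : ∀ i, Finset.card {p : Fin N × Fin k | e^[p.1] (Fin.natAdd r p.2) = i} = n)
    (hdt : (d - 1) * n < N * (t + 1))
    (hA : ∀ w ≠ 0, hammingNorm w ≤ t → d ≤ hammingNorm (A *ᵥ w) + hammingNorm w)
    {v : Fin (r + k) → K} (hv : systematic A *ᵥ v = 0) (hv0 : v ≠ 0) : d ≤ hammingNorm v := by
  by_contra! hlt
  obtain ⟨c, hc⟩ : ∃ c : Fin N, hammingNorm ((v ∘ e^[c]) ∘ Fin.natAdd r) ≤ t :=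
    exists_hammingNorm_comp_le hcover <| by
      rw [Fintype.card_fin]
      exact (Nat.mul_le_mul_right n (Nat.le_sub_one_of_lt hlt)).trans_lt hdt
  have hnorm : hammingNorm (v ∘ e^[c]) = hammingNorm v := by
    rw [← Equiv.Perm.coe_pow, hammingNorm_comp_equiv]
  have hsplit := hammingNorm_of_systematic_mulVec_eq_zero (mulVec_comp_iterate_eq_zero hT hv c)
  rw [hnorm] at hsplit
  by_cases hw : (v ∘ e^[c]) ∘ Fin.natAdd r = 0
  · rw [hw, Matrix.mulVec_zero, hammingNorm_zero, hammingNorm_zero, add_zero,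
      hammingNorm_eq_zero] at hsplit
    exact hv0 hsplit
  · exact hlt.not_ge (hsplit ▸ hA _ hw hc)

end MinimumDistance

section Code

open ModelF4

/-- The element of `𝔽₄` denoted by a base-4 digit: the digits `0, 1, 2, 3` stand for
`0, 1, ω, ω²`. Only the lowest digit of the argument matters. -/
def ofDigit (a : ℕ) : ModelF4 := ⟨a, (a / 2 : ℕ)⟩

/-- The check part of the code, each row being a base-4 numeral with the lowest digit first.
The rows of `[1 | checkPart]` are the reduced echelon basis of the quasi-cyclic code spanned by
the cyclic shifts of its first row by even distances. -/
def checkPart : Matrix (Fin 16) (Fin 26) ModelF4 := fun i j =>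
  ofDigit (rows i / 4 ^ (j : ℕ))
where
  rows : Fin 16 → ℕ :=
    ![0x548d4a35f6098, 0x183f5fc9701a7, 0x466b6a3e68bf, 0xd778b6a2f7ae8,
      0x466b6a3e68bf0, 0x172cda9d6cd46, 0x7e89fc2ffbea7, 0x2640e3e33b4f8,
      0xceb581963ba3, 0xccc8b129eff6c, 0xceb581963ba30, 0xf8a1e8191f59e,
      0xdf72e3e45a05e, 0x427fbe39b8aca, 0x97898ef7b6626, 0x3fc4bc52fad07]

lemma checkPart_mul_conjTranspose : checkPart * (checkPart.map (· ^ 2))ᵀ = 1 := by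
  decide +kernel

lemma exists_mul_systematic_checkPart_eq_shift :
    ∃ T, T * systematic checkPart =
      (systematic checkPart).submatrix id (Equiv.subRight (2 : Fin 42)).symm :=
  -- The left block of `T * [1 | checkPart]` is `T`, so `T` can be read off the right-hand side.
  ⟨(systematic checkPart).submatrix id fun i : Fin 16 => Fin.castAdd 26 i + (2 : Fin 42), by
    decide +kernel⟩

lemma card_shift_informationSet_eq : ∀ i : Fin 42,
    Finset.card {p : Fin 21 × Fin 26 | (Equiv.subRight (2 : Fin 42))^[p.1] (Fin.natAdd 16 p.2) = i}
      = 13 := by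
  decide +kernel

lemma nine_le_hammingNorm_checkPart_mulVec_add {w : Fin 26 → ModelF4} (hw0 : w ≠ 0)
    (hw : hammingNorm w ≤ 4) : 9 ≤ hammingNorm (checkPart *ᵥ w) + hammingNorm w := by
  have hpos : 0 < hammingNorm w := hammingNorm_pos_iff.mpr hw0
  obtain ⟨k, hk⟩ : ∃ k, hammingNorm w = k := ⟨_, rfl⟩
  suffices 9 - k ≤ hammingNorm (checkPart *ᵥ w) by lia
  rw [hk] at hw hpos
  interval_cases k <;> exact le_hammingNorm_mulVec (by decide +kernel) hk

lemma nine_le_hammingNorm {x : Fin 42 → ModelF4} (hx : systematic checkPart *ᵥ x = 0)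
    (hx0 : x ≠ 0) : 9 ≤ hammingNorm x := by
  obtain ⟨T, hT⟩ := exists_mul_systematic_checkPart_eq_shift
  exact le_hammingNorm_of_iterate_cover (t := 4) hT card_shift_informationSet_eq (by norm_num)
    (fun _ => nine_le_hammingNorm_checkPart_mulVec_add) hx hx0

lemma exists_hammingNorm_eq_nine :
    ∃ x : Fin 42 → ModelF4, systematic checkPart *ᵥ x = 0 ∧ hammingNorm x = 9 := by
  let w : Fin 26 → ModelF4 := fun j => if j = 8 then 1 else if j = 17 then ω else 0
  exact ⟨_, systematic_mulVec_append_neg checkPart w, by decide +kernel⟩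

end Code

section Transport

variable {K : Type*} [Field K]

lemma comp_mem_ker_systematic_iff {L : Type*} [Field L] (φ : K ≃+* L) {r k : ℕ}
    {A : Matrix (Fin r) (Fin k) K} {x : Fin (r + k) → K} :
    φ ∘ x ∈ LinearMap.ker (systematic (A.map φ)).mulVecLin ↔ systematic A *ᵥ x = 0 := by
  rw [← systematic_map A φ (map_zero φ) (map_one φ), LinearMap.mem_ker, Matrix.mulVecLin_apply]
  have hmap : (systematic A).map φ *ᵥ (φ ∘ x) = φ ∘ (systematic A *ᵥ x) :=
    funext fun i => (RingHom.map_mulVec φ.toRingHom (systematic A) x i).symm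
  rw [hmap, funext_iff, funext_iff]
  simp only [Function.comp_apply, Pi.zero_apply, map_eq_zero]

variable (φ : K ≃+* F4)

lemma hammingWt_comp [DecidableEq K] {m : ℕ} (x : Fin m → K) :
    hammingWt (φ ∘ x) = hammingNorm x :=
  Nat.subtype_card _ fun i => by simp

lemma hermDual_ker_systematic_map_le {r k : ℕ} {A : Matrix (Fin r) (Fin k) K}
    (hA : A * (A.map (· ^ 2))ᵀ = 1) :
    hermDual (LinearMap.ker (systematic (A.map φ)).mulVecLin) ≤
      LinearMap.ker (systematic (A.map φ)).mulVecLin := by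
  refine hermDual_ker_mulVecLin_le ?_
  have hφ : A.map φ * ((A.map φ).map (· ^ 2))ᵀ = 1 := by
    calc A.map φ * ((A.map φ).map (· ^ 2))ᵀ = (A * (A.map (· ^ 2))ᵀ).map φ := by
          rw [Matrix.map_mul]
          congr 1
          ext i j
          exact (map_pow φ _ _).symm
      _ = 1 := by rw [hA, Matrix.map_one φ (map_zero φ) (map_one φ)]
  rw [systematic_map _ (· ^ 2) (zero_pow two_ne_zero) (one_pow 2), systematic_mul_transpose, hφ]
  ext i j
  exact CharTwo.add_self_eq_zero _

end Transport

/-- There exists a Hermitian dual-containing `[42, 26, 9]₄` code. -/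
theorem exists_dual_containing_42_26_9 :
    ∃ Ccode : Submodule F4 (Fin 42 → F4),
      Module.finrank F4 ↥Ccode = 26 ∧
      (∀ u ∈ Ccode, u ≠ 0 → 9 ≤ hammingWt u) ∧
      (∃ u ∈ Ccode, u ≠ 0 ∧ hammingWt u = 9) ∧
      hermDual Ccode ≤ Ccode := by
  obtain ⟨φ⟩ := nonempty_modelF4_ringEquiv_F4
  refine ⟨LinearMap.ker (systematic (checkPart.map φ)).mulVecLin,
    finrank_ker_systematic (checkPart.map φ), fun u hu hu0 => ?_, ?_,
    hermDual_ker_systematic_map_le φ checkPart_mul_conjTranspose⟩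
  · obtain ⟨x, rfl⟩ : ∃ x, φ ∘ x = u := φ.surjective.comp_left u
    rw [hammingWt_comp]
    exact nine_le_hammingNorm ((comp_mem_ker_systematic_iff φ).mp hu) <|
      (Function.comp_eq_zero_iff x φ.injective (map_zero φ)).not.mp hu0
  · obtain ⟨x, hx, hx9⟩ := exists_hammingNorm_eq_nine
    have hx0 : x ≠ 0 := hammingNorm_ne_zero_iff.mp (by lia)
    exact ⟨φ ∘ x, (comp_mem_ker_systematic_iff φ).mpr hx,
      (Function.comp_eq_zero_iff x φ.injective (map_zero φ)).not.mpr hx0,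
      by rw [hammingWt_comp, hx9]⟩

end
end

section
/- There exists an F₄-linear code C ⊆ F₄^{78} of F₄-dimension 59 whose minimum Hamming distance is 9 and which contains its Hermitian dual: C^{⊥h} ⊆ C. -/
open Polynomial

set_option synthInstance.maxHeartbeats 1000000
set_option maxHeartbeats 1000000

noncomputable section

/-!
The code is the Euclidean dual of a code `D` of dimension 19. As `D` lies in its own Hermitian dual,
the Euclidean dual of `D` contains its Hermitian dual.

For the minimum distance, let `S` be a set of 8 coordinates. The words of `D` vanishing on `S` form
the kernel of the restriction of `D` to `S` and number at least `4 ^ 11`. If a nonzero word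
orthogonal to `D` is supported in `S`, the restriction is not onto and there are strictly more.
Counting pairs `(S, c)`, the minimum distance of the dual is therefore at least 9 as soon as
`∑ c ∈ D, (78 - wt c).choose 8 ≤ (78).choose 8 * 4 ^ 11`.

This sum over `4 ^ 19` words is computed using symmetry. Multiplication by `ω`, the quasi-cyclic
shift and a multiplier act on `D` without changing weights. The thirteenth power of the shift has
order 3 and eigenvalues `1`, `ω`, `ω²` on `D`; splitting off parts of the eigenspaces of `1` and `ω`
leaves `46 * 22` orbits of cosets of a code with `4 ^ 10` words. The weights of the words in one
coset are computed in parallel, one number of `2 ^ 20` binary digits per digit of a coordinate.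
-/

namespace HammingMoment

open Finset Module
open scoped Classical Matrix

section ZeroCount

variable {F ι : Type*} [Field F]

/-- The restriction of the words of `D` to the coordinates in `S`. -/
def restrict (D : Submodule F (ι → F)) (S : Finset ι) : D →ₗ[F] (S → F) :=
  LinearMap.funLeft F F Subtype.val ∘ₗ D.subtype

variable {D : Submodule F (ι → F)} {S : Finset ι} {t : ℕ} {u : ι → F}

lemma mem_ker_restrict {c : D} : c ∈ LinearMap.ker (restrict D S) ↔ ∀ i ∈ S, (c : ι → F) i = 0 := by
  simp [LinearMap.mem_ker, funext_iff, restrict]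

lemma pow_le_card_ker_restrict [Finite ι] [Fintype F] (D : Submodule F (ι → F)) (S : Finset ι) :
    Fintype.card F ^ (finrank F D - #S) ≤ Nat.card (LinearMap.ker (restrict D S)) := by
  have hrank := (restrict D S).finrank_range_add_finrank_ker
  have hle := Submodule.finrank_le (LinearMap.range (restrict D S))
  rw [finrank_fintype_fun_eq_card, Fintype.card_coe] at hle
  rw [Module.natCard_eq_pow_finrank (K := F), Nat.card_eq_fintype_card]
  exact Nat.pow_le_pow_right Fintype.card_pos (by lia)

lemma pow_lt_card_ker_restrict [Finite ι] [Fintype F] (hS : #S ≤ finrank F D)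
    (hsurj : ¬ Function.Surjective (restrict D S)) :
    Fintype.card F ^ (finrank F D - #S) < Nat.card (LinearMap.ker (restrict D S)) := by
  have hrank := (restrict D S).finrank_range_add_finrank_ker
  have hlt := Submodule.finrank_lt (mt LinearMap.range_eq_top.1 hsurj)
  rw [finrank_fintype_fun_eq_card, Fintype.card_coe] at hlt
  rw [Module.natCard_eq_pow_finrank (K := F), Nat.card_eq_fintype_card]
  exact Nat.pow_lt_pow_right Fintype.one_lt_card (by lia)

variable [Fintype ι]

lemma card_powersetCard_filter_vanishing [DecidableEq ι] (c : ι → F) (t : ℕ) :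
    #{S ∈ powersetCard t univ | ∀ i ∈ S, c i = 0} =
      (Fintype.card ι - hammingNorm c).choose t := by
  have zeros : #{i | c i = 0} = Fintype.card ι - hammingNorm c := by
    rw [← card_univ, ← card_filter_add_card_filter_not (s := univ) fun i => c i = 0, hammingNorm]
    exact (Nat.add_sub_cancel ..).symm
  rw [← zeros, ← card_powersetCard]
  congr 1
  ext S
  simp [mem_powersetCard, subset_iff, and_comm]

lemma not_surjective_restrict (hu : u ≠ 0) (hS : ∀ i, u i ≠ 0 → i ∈ S)
    (horth : ∀ c ∈ D, c ⬝ᵥ u = 0) : ¬ Function.Surjective (restrict D S) := by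
  intro hsurj
  obtain ⟨j, hj⟩ := Function.ne_iff.1 hu
  obtain ⟨c, hc⟩ := hsurj (Pi.single ⟨j, hS j hj⟩ 1)
  have hcS (i : ι) (hi : i ∈ S) : (c : ι → F) i = if i = j then 1 else 0 := by
    simpa [Pi.single_apply, restrict, LinearMap.funLeft_apply] using congrFun hc ⟨i, hi⟩
  refine hj ((?_ : u j = c ⬝ᵥ u).trans (horth c c.2))
  rw [dotProduct, sum_eq_single j]
  · simp [hcS j (hS j hj)]
  · intro i _ hij
    by_cases hi : u i = 0
    · simp [hi]
    · simp [hcS i (hS i hi), hij]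
  · simp

variable [Fintype F]

lemma sum_choose_card_sub_hammingNorm [DecidableEq ι] (D : Submodule F (ι → F)) (t : ℕ) :
    ∑ c : D, (Fintype.card ι - hammingNorm (c : ι → F)).choose t =
      ∑ S ∈ powersetCard t univ, Nat.card (LinearMap.ker (restrict D S)) := by
  simp_rw [← card_powersetCard_filter_vanishing, card_filter]
  rw [sum_comm]
  refine sum_congr rfl fun S _ => ?_
  rw [Nat.card_eq_fintype_card, Fintype.card_subtype, card_filter]
  exact sum_congr rfl fun c _ => if_congr mem_ker_restrict.symm rfl rfl

theorem lt_hammingNorm_of_sum_choose_le [DecidableEq ι] (ht : t ≤ finrank F D)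
    (hsum : ∑ c : D, (Fintype.card ι - hammingNorm (c : ι → F)).choose t ≤
      (Fintype.card ι).choose t * Fintype.card F ^ (finrank F D - t))
    (hu : u ≠ 0) (horth : ∀ c ∈ D, c ⬝ᵥ u = 0) : t < hammingNorm u := by
  by_contra! hsupp
  have htι : t ≤ #(univ : Finset ι) := by
    simpa using ht.trans (Submodule.finrank_le D)
  obtain ⟨S₀, hS₀, hS₀t⟩ := exists_superset_card_eq hsupp htι
  refine hsum.not_gt ?_
  rw [sum_choose_card_sub_hammingNorm, ← card_univ, ← card_powersetCard, ← smul_eq_mul,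
    ← sum_const]
  refine sum_lt_sum (fun S hS => ?_) ⟨S₀, mem_powersetCard.2 ⟨subset_univ _, hS₀t⟩, ?_⟩
  · rw [← (mem_powersetCard.1 hS).2]
    exact pow_le_card_ker_restrict D S
  · rw [← hS₀t] at ht ⊢
    exact pow_lt_card_ker_restrict ht
      (not_surjective_restrict hu (fun i hi => hS₀ (by simpa using hi)) horth)

end ZeroCount

section DualCode

variable {F ι : Type*} [Field F] [Fintype ι]

/-- The Euclidean dual code of `D`. -/
def dualCode (D : Submodule F (ι → F)) : Submodule F (ι → F) :=
  LinearMap.BilinForm.orthogonal (dotProductBilin F F) D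

lemma mem_dualCode {D : Submodule F (ι → F)} {v : ι → F} :
    v ∈ dualCode D ↔ ∀ c ∈ D, c ⬝ᵥ v = 0 :=
  Iff.rfl

lemma nondegenerate_dotProductBilin :
    LinearMap.BilinForm.Nondegenerate (dotProductBilin F F : LinearMap.BilinForm F (ι → F)) :=
  ⟨fun v hv => dotProduct_eq_zero v hv,
    fun v hv => dotProduct_eq_zero v fun w => (dotProduct_comm v w).trans (hv w)⟩

lemma finrank_dualCode (D : Submodule F (ι → F)) :
    finrank F (dualCode D) = Fintype.card ι - finrank F D := by
  rw [dualCode, LinearMap.BilinForm.finrank_orthogonal nondegenerate_dotProductBilin,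
    finrank_fintype_fun_eq_card]

lemma dualCode_dualCode (D : Submodule F (ι → F)) : dualCode (dualCode D) = D :=
  LinearMap.BilinForm.orthogonal_orthogonal nondegenerate_dotProductBilin
    (fun v w h => (dotProduct_comm w v).trans h) D

lemma span_le_dualCode_span {s t : Set (ι → F)} (h : ∀ u ∈ s, ∀ v ∈ t, u ⬝ᵥ v = 0) :
    Submodule.span F t ≤ dualCode (Submodule.span F s) := by
  refine Submodule.span_le.2 fun v hv c hc => ?_
  induction hc using Submodule.span_induction with
  | mem u hu => exact h u hu v hv
  | zero => exact zero_dotProduct v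
  | add x y _ _ hx hy => rw [map_add, LinearMap.add_apply, hx, hy, add_zero]
  | smul a x _ hx => rw [map_smul, LinearMap.smul_apply, hx, smul_zero]

lemma hammingWt_eq_hammingNorm {m : ℕ} (u : Fin m → F4) : hammingWt u = hammingNorm u := by
  rw [hammingWt, Nat.card_eq_fintype_card, Fintype.card_subtype, hammingNorm]

lemma span_le_hermDual_span {m : ℕ} {s : Set (Fin m → F4)}
    (h : ∀ u ∈ s, ∀ v ∈ s, u ⬝ᵥ v ^ 2 = 0) :
    Submodule.span F4 s ≤ hermDual (Submodule.span F4 s) := by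
  refine Submodule.span_le.2 fun v hv u hu => ?_
  have hle := span_le_dualCode_span (s := s) (t := {v ^ 2}) fun u hu w hw => hw ▸ h u hu v hv
  exact hle (Submodule.subset_span rfl) u hu

lemma hermDual_dualCode_le {m : ℕ} {D : Submodule F4 (Fin m → F4)} (hD : D ≤ hermDual D) :
    hermDual (dualCode D) ≤ dualCode D := by
  intro v hv c hc
  have hv2 : v ^ 2 ∈ D := by
    rw [← dualCode_dualCode D]
    exact hv
  have hsq : (c ⬝ᵥ v) ^ 2 = hermInner (v ^ 2) c := by
    simp only [dotProduct, hermInner, sum_pow_char, mul_pow, Pi.pow_apply, mul_comm]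
  exact pow_eq_zero_iff two_ne_zero |>.1 (hsq.trans (hD hc _ hv2))

end DualCode

section Word

/-- The combination over `F₂` of the bit vectors `bs` whose coefficients are the binary digits of
`k`, the head of `bs` belonging to the highest digit. -/
def comb : List ℕ → ℕ → ℕ
  | [], _ => 0
  | b :: bs, k => bif k.testBit bs.length then b ^^^ comb bs k else comb bs k

lemma comb_xor (bs : List ℕ) (k l : ℕ) : comb bs (k ^^^ l) = comb bs k ^^^ comb bs l := by
  induction bs with
  | nil => simp [comb]
  | cons b bs ih =>
    simp only [comb, ih, Nat.testBit_xor]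
    cases k.testBit bs.length <;> cases l.testBit bs.length <;>
      simp [Nat.xor_assoc, Nat.xor_left_comm b]

lemma comb_congr {bs : List ℕ} {k l : ℕ} (h : ∀ i < bs.length, k.testBit i = l.testBit i) :
    comb bs k = comb bs l := by
  induction bs with
  | nil => rfl
  | cons b bs ih => simp only [comb, h bs.length (by simp), ih fun i hi => h i (by simp; lia)]

variable {F : Type*} [Field F]

/-- A binary digit as the element `0` or `1` of `F`. -/
def ofBit (F : Type*) [Field F] (b : Bool) : F := bif b then 1 else 0

lemma ofBit_and (a b : Bool) : ofBit F (a && b) = ofBit F a * ofBit F b := by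
  cases a <;> cases b <;> simp [ofBit]

lemma ofBit_xor [CharP F 2] (a b : Bool) : ofBit F (a ^^ b) = ofBit F a + ofBit F b := by
  cases a <;> cases b <;> simp [ofBit, CharTwo.add_self_eq_zero]

/-- The word encoded by `w`: its coordinate `i` is `a + bω`, where `a` and `b` are the binary
digits of `w` at positions `i` and `n + i`. -/
def word (ω : F) (n w : ℕ) : Fin n → F :=
  fun i => ofBit F (w.testBit i) + ofBit F (w.testBit (n + i)) * ω

/-- The linear code generated by the words encoded by `bs`. -/
def wordSpan (ω : F) (n : ℕ) (bs : List ℕ) : Submodule F (Fin n → F) :=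
  Submodule.span F (word ω n '' {b | b ∈ bs})

/-- The encoding of `ω` times the word encoded by `w`, for `ω² = ω + 1`. -/
def mulOmega (n w : ℕ) : ℕ := (w >>> n) % 2 ^ n ^^^ ((w ^^^ w >>> n) % 2 ^ n) <<< n

/-- Encodings of generators over the prime field: every `b` followed by its multiple by `ω`. -/
def doubled (n : ℕ) (bs : List ℕ) : List ℕ := bs.flatMap fun b => [b, mulOmega n b]

variable {ω : F} {n : ℕ}

lemma word_zero : word ω n 0 = 0 := by
  ext i; simp [word, ofBit]

lemma wordSpan_append (bs cs : List ℕ) :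
    wordSpan ω n (bs ++ cs) = wordSpan ω n bs ⊔ wordSpan ω n cs := by
  simp only [wordSpan, ← Submodule.span_union, ← Set.image_union, List.mem_append, Set.ofPred_or]

variable [CharP F 2]

lemma word_xor (w w' : ℕ) : word ω n (w ^^^ w') = word ω n w + word ω n w' := by
  ext i
  simp only [word, Nat.testBit_xor, ofBit_xor, Pi.add_apply]
  ring

lemma word_mulOmega (hω : ω ^ 2 = ω + 1) (w : ℕ) :
    word ω n (mulOmega n w) = ω • word ω n w := by
  ext i
  have lo : (mulOmega n w).testBit i = w.testBit (n + i) := by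
    simp [mulOmega, Nat.testBit_shiftLeft, i.2, i.2.not_ge]
  have hi : (mulOmega n w).testBit (n + i) = (w.testBit i ^^ w.testBit (n + i)) := by
    simp [mulOmega, Nat.testBit_shiftLeft, i.2]
  simp only [word, lo, hi, ofBit_xor, Pi.smul_apply, smul_eq_mul]
  linear_combination -ofBit F (w.testBit (n + i)) * hω

lemma exists_word_comb_eq (hω : ω ^ 2 = ω + 1)
    (hF : ∀ x : F, ∃ a b, x = ofBit F a + ofBit F b * ω) (bs : List ℕ) {v : Fin n → F}
    (hv : v ∈ wordSpan ω n bs) :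
    ∃ k < 2 ^ (doubled n bs).length, word ω n (comb (doubled n bs) k) = v := by
  induction bs generalizing v with
  | nil =>
    refine ⟨0, by simp, ?_⟩
    simpa [wordSpan, doubled, comb, word_zero, eq_comm] using hv
  | cons b bs ih =>
    rw [← List.singleton_append, wordSpan_append] at hv
    obtain ⟨u, hu, v', hv', rfl⟩ := Submodule.mem_sup.1 hv
    simp only [wordSpan, List.mem_singleton, Set.ofPred_eq_eq_singleton, Set.image_singleton,
      Submodule.mem_span_singleton] at hu
    obtain ⟨x, rfl⟩ := hu
    obtain ⟨a, c, rfl⟩ := hF x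
    obtain ⟨k, hk, rfl⟩ := ih hv'
    set ℓ := (doubled n bs).length with hℓ
    have hcons : doubled n (b :: bs) = b :: mulOmega n b :: doubled n bs := rfl
    refine ⟨2 ^ ℓ * (2 * a.toNat + c.toNat) + k, ?_, ?_⟩
    · rw [hcons, List.length_cons, List.length_cons, ← hℓ, pow_succ, pow_succ]
      cases a <;> cases c <;> simp <;> lia
    · have htail : comb (doubled n bs) (2 ^ ℓ * (2 * a.toNat + c.toNat) + k) =
          comb (doubled n bs) k :=
        comb_congr fun i hi => by rw [Nat.testBit_two_pow_mul_add _ hk, if_pos hi]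
      have hbits : (2 * a.toNat + c.toNat).testBit 1 = a ∧
          (2 * a.toNat + c.toNat).testBit 0 = c := by
        cases a <;> cases c <;> decide
      simp only [hcons, comb, htail, hbits, Nat.testBit_two_pow_mul_add _ hk, List.length_cons,
        ← hℓ, lt_irrefl, if_false, Nat.sub_self, show ¬ ℓ + 1 < ℓ by lia, Nat.add_sub_cancel_left]
      cases a <;> cases c <;>
        simp [word_xor, word_mulOmega hω, ofBit, add_smul, add_assoc]

lemma sum_le_sum_map_of_forall_mem {α : Type*} {s : Finset α} {l : List α} (h : ∀ x ∈ s, x ∈ l)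
    (G : α → ℕ) : ∑ x ∈ s, G x ≤ (l.map G).sum := by
  rw [sum_list_map_count]
  refine (sum_le_sum_of_subset fun x hx => List.mem_toFinset.2 (h x hx)).trans
    (sum_le_sum fun x hx => Nat.le_mul_of_pos_left _ ?_)
  exact List.count_pos_iff.2 (List.mem_toFinset.1 hx)

lemma sum_wordSpan_le [Fintype F] (hω : ω ^ 2 = ω + 1)
    (hF : ∀ x : F, ∃ a b, x = ofBit F a + ofBit F b * ω) {bs K : List ℕ}
    (hK : ∀ k < 2 ^ (doubled n bs).length, k ∈ K) (G : (Fin n → F) → ℕ) :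
    ∑ v : wordSpan ω n bs, G v ≤ (K.map fun k => G (word ω n (comb (doubled n bs) k))).sum := by
  have hcover : ∀ v ∈ univ.map (Function.Embedding.subtype (· ∈ wordSpan ω n bs)),
      v ∈ K.map fun k => word ω n (comb (doubled n bs) k) := by
    intro v hv
    obtain ⟨v, -, rfl⟩ := mem_map.1 hv
    obtain ⟨k, hk, hkv⟩ := exists_word_comb_eq hω hF bs v.2
    exact List.mem_map.2 ⟨k, hK k hk, hkv⟩
  simpa [List.map_map, Function.comp_def] using sum_le_sum_map_of_forall_mem hcover G

end Word

section CosetSum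

variable {F V : Type*} [Field F] [AddCommGroup V] [Module F V] [Fintype V]

/-- The sum of `f` over the coset `v + E`. -/
def cosetSum (f : V → ℕ) (E : Submodule F V) (v : V) : ℕ := ∑ e : E, f (v + e)

variable {f : V → ℕ} {E : Submodule F V}

lemma cosetSum_map {σ : V →ₗ[F] V} (hσ : Function.Injective σ) (hf : ∀ v, f (σ v) = f v)
    (hE : E ≤ E.comap σ) (v : V) : cosetSum f E (σ v) = cosetSum f E v := by
  have hinj : Function.Injective (σ.restrict hE) := fun x y h =>
    Subtype.ext (hσ (congrArg Subtype.val h))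
  refine (Fintype.sum_bijective (σ.restrict hE) (Finite.injective_iff_bijective.1 hinj) _ _
    fun e => ?_).symm
  rw [LinearMap.coe_restrict_apply, ← map_add, hf]

lemma cosetSum_sup_le (f : V → ℕ) (A E : Submodule F V) (v : V) :
    cosetSum f (A ⊔ E) v ≤ ∑ a : A, cosetSum f E (v + a) := by
  let g (p : A × E) : ↥(A ⊔ E) := ⟨p.1 + p.2, Submodule.add_mem_sup p.1.2 p.2.2⟩
  have hg : univ.image g = univ := image_univ_of_surjective fun c => by
    obtain ⟨a, ha, e, he, hae⟩ := Submodule.mem_sup.1 c.2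
    exact ⟨(⟨a, ha⟩, ⟨e, he⟩), Subtype.ext hae⟩
  calc cosetSum f (A ⊔ E) v
      ≤ ∑ c : ↥(A ⊔ E), #{p | g p = c} • f (v + c) := sum_le_sum fun c _ =>
        Nat.le_mul_of_pos_left _ <| card_pos.2 <| by
          simpa [Finset.Nonempty, eq_comm] using hg.ge (mem_univ c)
    _ = ∑ p : A × E, f (v + g p) := by rw [sum_comp (fun c : ↥(A ⊔ E) => f (v + c)) g, hg]
    _ = ∑ a : A, cosetSum f E (v + a) := by
        simp only [Fintype.sum_prod_type, cosetSum, g, add_assoc]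

end CosetSum

section PopCount

/- `popCount` and the functions built on it call `Nat.land`, `Nat.xor`, … without notation, so that
the kernel meets its built-in big-number operations without unfolding instances. -/

/-- The number whose `2 ^ e` binary digits are all one. -/
def ones (e : ℕ) : ℕ := Nat.pred (Nat.pow 2 (Nat.pow 2 e))

/-- One step of the parallel bit count: a number of `2 ^ e` digits is cut into fields of `k` digits,
and adjacent fields are added into fields of `2 * k` digits. The mask `m` selects every other
field. -/
def foldFields (e k x : ℕ) : ℕ :=
  (fun m => (x.land m).add ((x.shiftRight k).land m)) ((ones e).div (Nat.pow 2 k + 1))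

/-- The number of ones among the `2 ^ e` digits of `x`, for `5 ≤ e < 32`. Five folding steps leave
fields of `32` digits, which reduction modulo `2 ^ 32 - 1` adds up. -/
def popCount (e x : ℕ) : ℕ :=
  foldFields e 16 (foldFields e 8 (foldFields e 4 (foldFields e 2 (foldFields e 1 x)))) % 4294967295

lemma sum_digits_add_mul {b r : ℕ} (hb : 1 < b) (hr : r < b) (q : ℕ) :
    (b.digits (r + b * q)).sum = r + (b.digits q).sum := by
  by_cases h : r ≠ 0 ∨ q ≠ 0
  · rw [Nat.digits_add b hb r q hr h, List.sum_cons]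
  · obtain ⟨rfl, rfl⟩ : r = 0 ∧ q = 0 := by simpa using h
    simp

lemma sum_digits_two {N x : ℕ} (hx : x < 2 ^ N) :
    (Nat.digits 2 x).sum = ∑ l ∈ range N, (x.testBit l).toNat := by
  induction N generalizing x with
  | zero => simp_all
  | succ N ih =>
    conv_lhs => rw [← Nat.mod_add_div x 2]
    rw [sum_digits_add_mul one_lt_two (Nat.mod_lt _ two_pos), ih (by lia), sum_range_succ',
      Nat.toNat_testBit x 0, pow_zero, Nat.div_one, add_comm]
    simp only [Nat.testBit_succ]

/-- The mask selecting every other field of `k` digits, with `N` fields selected. -/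
def fieldMask (k : ℕ) : ℕ → ℕ
  | 0 => 0
  | N + 1 => (2 ^ k - 1) + 2 ^ (2 * k) * fieldMask k N

lemma fieldMask_mul (k N : ℕ) : fieldMask k N * (2 ^ k + 1) = 2 ^ (2 * k * N) - 1 := by
  have hk := Nat.one_le_two_pow (n := k)
  induction N with
  | zero => simp [fieldMask]
  | succ N ih =>
    have hN := Nat.one_le_two_pow (n := 2 * k * N)
    rw [fieldMask, add_mul, mul_assoc, ih, mul_add_one (2 * k), pow_add, pow_mul' 2 2 k]
    zify [hk, hN, one_le_mul hN (Nat.one_le_pow 2 _ hk)]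
    ring

lemma fieldMask_eq (k N : ℕ) : fieldMask k N = (2 ^ (2 * k * N) - 1) / (2 ^ k + 1) := by
  rw [← fieldMask_mul, Nat.mul_div_cancel _ (Nat.succ_pos _)]

lemma land_fieldMask_succ (k N x : ℕ) :
    x &&& fieldMask k (N + 1) = x % 2 ^ k + 2 ^ (2 * k) * (x / 2 ^ (2 * k) &&& fieldMask k N) := by
  have hlt {y : ℕ} (hy : y < 2 ^ k) : y < 2 ^ (2 * k) :=
    hy.trans_le (Nat.pow_le_pow_right two_pos (by lia))
  refine Nat.eq_of_testBit_eq fun i => ?_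
  rw [Nat.testBit_and, fieldMask, add_comm (2 ^ k - 1), add_comm (x % 2 ^ k),
    Nat.testBit_two_pow_mul_add _ (hlt (Nat.sub_lt (Nat.two_pow_pos k) one_pos)),
    Nat.testBit_two_pow_mul_add _ (hlt (Nat.mod_lt _ (Nat.two_pow_pos k)))]
  split_ifs with hi
  · simp [Nat.testBit_two_pow_sub_one, Bool.and_comm]
  · rw [Nat.testBit_and, Nat.testBit_div_two_pow, Nat.sub_add_cancel (by lia)]

lemma sum_digits_land_add_land {k N x : ℕ} (hk : 0 < k) (hx : x < 2 ^ (2 * k * N)) :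
    (Nat.digits (2 ^ (2 * k)) ((x &&& fieldMask k N) + (x >>> k &&& fieldMask k N))).sum =
      (Nat.digits (2 ^ k) x).sum := by
  have hpow := Nat.one_lt_two_pow hk.ne'
  have hsq : 2 ^ (2 * k) = 2 ^ k * 2 ^ k := by ring
  induction N generalizing x with
  | zero => simp_all [fieldMask]
  | succ N ih =>
    have hlo := Nat.mod_lt x (by lia : 2 ^ k > 0)
    have hhi := Nat.mod_lt (x / 2 ^ k) (by lia : 2 ^ k > 0)
    have hshift : x >>> k / 2 ^ (2 * k) = (x / 2 ^ (2 * k)) >>> k := by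
      simp only [Nat.shiftRight_eq_div_pow, Nat.div_div_eq_div_mul, mul_comm]
    rw [land_fieldMask_succ, land_fieldMask_succ, hshift, Nat.shiftRight_eq_div_pow,
      add_add_add_comm, ← mul_add, sum_digits_add_mul (by nlinarith) (by nlinarith), ih]
    · conv_rhs => rw [← Nat.mod_add_div x (2 ^ k), ← Nat.mod_add_div (x / 2 ^ k) (2 ^ k)]
      rw [sum_digits_add_mul hpow hlo, sum_digits_add_mul hpow hhi, Nat.div_div_eq_div_mul, hsq,
        add_assoc]
    · rw [mul_add_one (2 * k), pow_add] at hx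
      exact Nat.div_lt_of_lt_mul (by rwa [mul_comm])

lemma sum_digits_foldFields {e k x : ℕ} (hk : 0 < k) (hke : 2 * k ∣ 2 ^ e) (hx : x < 2 ^ 2 ^ e) :
    (Nat.digits (2 ^ (2 * k)) (foldFields e k x)).sum = (Nat.digits (2 ^ k) x).sum := by
  obtain ⟨N, hN⟩ := hke
  rw [hN] at hx
  rw [← sum_digits_land_add_land hk hx, fieldMask_eq, ← hN]
  rfl

lemma foldFields_lt (e k x : ℕ) : foldFields e k x < 2 ^ 2 ^ e := by
  set m := (2 ^ 2 ^ e - 1) / (2 ^ k + 1)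
  have hdef : foldFields e k x = (x &&& m) + (x >>> k &&& m) := rfl
  have hlo : x &&& m ≤ m := Nat.and_le_right
  have hhi : x >>> k &&& m ≤ m := Nat.and_le_right
  have hmask : m * (2 ^ k + 1) ≤ 2 ^ 2 ^ e - 1 := Nat.div_mul_le_self ..
  have htwo : m * 2 ≤ m * (2 ^ k + 1) :=
    Nat.mul_le_mul_left m (Nat.succ_le_succ Nat.one_le_two_pow)
  have hpos := Nat.two_pow_pos (2 ^ e)
  lia

lemma popCount_eq {e x : ℕ} (he₅ : 5 ≤ e) (he : e < 32) (hx : x < 2 ^ 2 ^ e) :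
    popCount e x = ∑ l ∈ range (2 ^ e), (x.testBit l).toNat := by
  have hdvd {i : ℕ} (hi : i < 5) : 2 * 2 ^ i ∣ 2 ^ e :=
    (pow_succ' 2 i).symm ▸ pow_dvd_pow 2 (by lia)
  set y := foldFields e 16 (foldFields e 8 (foldFields e 4 (foldFields e 2 (foldFields e 1 x))))
  have hdigits : (Nat.digits (2 ^ 32) y).sum = ∑ l ∈ range (2 ^ e), (x.testBit l).toNat := by
    rw [← sum_digits_two hx]
    exact (sum_digits_foldFields (by simp) (hdvd (i := 4) (by simp)) (foldFields_lt ..)).trans <|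
      (sum_digits_foldFields (by simp) (hdvd (i := 3) (by simp)) (foldFields_lt ..)).trans <|
      (sum_digits_foldFields (by simp) (hdvd (i := 2) (by simp)) (foldFields_lt ..)).trans <|
      (sum_digits_foldFields (by simp) (hdvd (i := 1) (by simp)) (foldFields_lt ..)).trans <|
      sum_digits_foldFields (by simp) (hdvd (i := 0) (by simp)) hx
  have hmod : popCount e x = (Nat.digits (2 ^ 32) y).sum % (2 ^ 32 - 1) :=
    Nat.modEq_digits_sum _ _ (by norm_num) y
  rw [hmod, hdigits]
  refine Nat.mod_eq_of_lt ?_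
  calc ∑ l ∈ range (2 ^ e), (x.testBit l).toNat
      ≤ ∑ _l ∈ range (2 ^ e), 1 := sum_le_sum fun l _ => Bool.toNat_le _
    _ = 2 ^ e := by simp
    _ ≤ 2 ^ 31 := Nat.pow_le_pow_right two_pos (by lia)
    _ < 2 ^ 32 - 1 := by norm_num

end PopCount

section Evaluator

/-- The number whose binary digit `l` is the digit `j` of `comb bs l`, for `l < 2 ^ bs.length`. -/
def lane (j : ℕ) : List ℕ → ℕ
  | [] => 0
  | b :: bs => (lane j bs).lor
      ((bif b.testBit j then (lane j bs).xor (ones bs.length) else lane j bs).shiftLeft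
        (Nat.pow 2 bs.length))

/-- The lane of the digits `j`, complemented if `b` holds. -/
def flipLane (bs : List ℕ) (b : Bool) (j : ℕ) : ℕ :=
  bif b then (lane j bs).xor (ones bs.length) else lane j bs

/-- The value `g b`, by cases so that the kernel evaluates `b` once before it is substituted. -/
def force (b : Bool) (g : Bool → ℕ) : ℕ := bif b then g true else g false

/-- The number whose digit `l` tells whether the coordinate `i` of the word encoded by
`w ^^^ comb bs l` is nonzero. -/
def nonzeroLane (n : ℕ) (bs : List ℕ) (w i : ℕ) : ℕ :=
  force (w.testBit i) fun a => force (w.testBit (n + i)) fun b =>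
    (flipLane bs a i).lor (flipLane bs b (n + i))

/-- Simultaneous addition of the numbers stored in two lists of bit planes, with carries `c`. -/
def addPlanes (c : ℕ) : List ℕ → List ℕ → List ℕ
  | p :: ps, q :: qs =>
    (p.xor q).xor c :: addPlanes ((p.land q).lor ((p.xor q).land c)) ps qs
  | _, _ => [c]

/-- The number stored at position `l` of a list of bit planes, the least significant plane first. -/
def planeVal (l : ℕ) : List ℕ → ℕ
  | [] => 0
  | p :: ps => (p.testBit l).toNat + 2 * planeVal l ps

/-- The bit planes counting, at every position `l`, the indices `i < n` in `[o, o + 2 ^ k - 1)` for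
which the digit `l` of `f i` is one. The two halves of the range after `o` are added with carry
`f o`. -/
def countPlanes (n : ℕ) (f : ℕ → ℕ) : ℕ → ℕ → List ℕ
  | 0, _ => []
  | k + 1, o => bif Nat.blt o n then
      addPlanes (f o) (countPlanes n f k (o + 1)) (countPlanes n f k (o + 2 ^ k))
    else List.replicate (k + 1) 0

/-- The sum of `f` over the numbers stored in bit planes at the positions selected by the mask `m`
of `2 ^ e` digits, which is split along one plane after the other. -/
def histSum (e : ℕ) : (ℕ → ℕ) → List ℕ → ℕ → ℕ
  | f, [], m => bif f 0 == 0 then 0 else f 0 * popCount e m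
  | f, p :: ps, m => bif m == 0 then 0 else
      histSum e (fun v => f (2 * v + 1)) ps (m.land p) +
        histSum e (fun v => f (2 * v)) ps (m.xor (m.land p))

lemma testBit_ones (e l : ℕ) : (ones e).testBit l = decide (l < 2 ^ e) :=
  Nat.testBit_two_pow_sub_one ..

lemma testBit_lane_cons (j b : ℕ) (bs : List ℕ) (l : ℕ) :
    (lane j (b :: bs)).testBit l = ((lane j bs).testBit l ||
      decide (2 ^ bs.length ≤ l) && (flipLane bs (b.testBit j) j).testBit (l - 2 ^ bs.length)) :=
  (Nat.testBit_or _ _ l).trans (congrArg _ (Nat.testBit_shiftLeft ..))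

lemma testBit_flipLane_eq (b : Bool) (j : ℕ) (bs : List ℕ) (l : ℕ) :
    (flipLane bs b j).testBit l = ((lane j bs).testBit l ^^ (b && decide (l < 2 ^ bs.length))) := by
  cases b
  · exact (Bool.xor_false _).symm
  · exact (Nat.testBit_xor _ _ l).trans (congrArg _ (testBit_ones ..))

lemma testBit_lane (j : ℕ) (bs : List ℕ) (l : ℕ) :
    (lane j bs).testBit l = (decide (l < 2 ^ bs.length) && (comb bs l).testBit j) := by
  induction bs generalizing l with
  | nil => simp [lane, comb]
  | cons b bs ih =>
    simp only [testBit_lane_cons, testBit_flipLane_eq, ih, List.length_cons, pow_succ]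
    obtain hl | hl := lt_or_ge l (2 ^ bs.length)
    · simp [hl, hl.not_ge, comb, Nat.testBit_lt_two_pow hl, show l < 2 ^ bs.length * 2 by lia]
    · obtain ⟨m, rfl⟩ := Nat.exists_eq_add_of_le hl
      by_cases hm : m < 2 ^ bs.length
      · have htail : comb bs (2 ^ bs.length + m) = comb bs m := comb_congr fun i hi =>
          Nat.testBit_two_pow_add_gt hi m
        have hhead : (2 ^ bs.length + m).testBit bs.length = true := by
          rw [Nat.testBit_two_pow_add_eq, Nat.testBit_lt_two_pow hm, Bool.not_false]
        simp [hm, comb, htail, hhead, Nat.testBit_xor, Bool.xor_comm, mul_two]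
      · simp [hm, mul_two]

lemma testBit_flipLane (b : Bool) (j : ℕ) {bs : List ℕ} {l : ℕ} (hl : l < 2 ^ bs.length) :
    (flipLane bs b j).testBit l = (b ^^ (comb bs l).testBit j) := by
  simp [testBit_flipLane_eq, testBit_lane, hl, Bool.xor_comm]

lemma testBit_nonzeroLane (n w i : ℕ) {bs : List ℕ} {l : ℕ} (hl : l < 2 ^ bs.length) :
    (nonzeroLane n bs w i).testBit l =
      ((w ^^^ comb bs l).testBit i || (w ^^^ comb bs l).testBit (n + i)) := by
  have hforce (b : Bool) (g : Bool → ℕ) : force b g = g b := by cases b <;> rfl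
  rw [nonzeroLane, hforce, hforce]
  refine (Nat.testBit_or _ _ l).trans ?_
  simp only [testBit_flipLane _ _ hl, Nat.testBit_xor]

lemma length_addPlanes (c : ℕ) {ps qs : List ℕ} (h : ps.length = qs.length) :
    (addPlanes c ps qs).length = ps.length + 1 := by
  induction ps generalizing qs c with
  | nil => simp [addPlanes]
  | cons p ps ih =>
    obtain ⟨q, qs, rfl⟩ := List.exists_cons_of_length_eq_add_one h.symm
    simp [addPlanes, ih _ (Nat.succ.inj h)]

lemma planeVal_addPlanes (l c : ℕ) {ps qs : List ℕ} (h : ps.length = qs.length) :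
    planeVal l (addPlanes c ps qs) = (c.testBit l).toNat + planeVal l ps + planeVal l qs := by
  induction ps generalizing qs c with
  | nil => simp_all [addPlanes, planeVal, eq_comm]
  | cons p ps ih =>
    obtain ⟨q, qs, rfl⟩ := List.exists_cons_of_length_eq_add_one h.symm
    have hsum : ((p.xor q).xor c).testBit l = (p.testBit l ^^ q.testBit l ^^ c.testBit l) :=
      (Nat.testBit_xor (p ^^^ q) c l).trans (by simp)
    have hcarry : ((p.land q).lor ((p.xor q).land c)).testBit l =
        (p.testBit l && q.testBit l || (p.testBit l ^^ q.testBit l) && c.testBit l) :=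
      (Nat.testBit_or (p &&& q) ((p ^^^ q) &&& c) l).trans (by simp)
    rw [addPlanes, planeVal, ih _ (Nat.succ.inj h), hsum, hcarry, planeVal, planeVal]
    cases p.testBit l <;> cases q.testBit l <;> cases c.testBit l <;> simp <;> ring

lemma length_countPlanes (n : ℕ) (f : ℕ → ℕ) (k o : ℕ) : (countPlanes n f k o).length = k := by
  induction k generalizing o with
  | zero => rfl
  | succ k ih =>
    rw [countPlanes]
    cases Nat.blt o n
    · simp
    · rw [cond_true, length_addPlanes _ ((ih _).trans (ih _).symm), ih]

lemma planeVal_replicate_zero (l k : ℕ) : planeVal l (List.replicate k 0) = 0 := by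
  induction k with
  | zero => rfl
  | succ k ih => simp [List.replicate_succ, planeVal, ih]

lemma planeVal_countPlanes (n : ℕ) (f : ℕ → ℕ) (l k o : ℕ) :
    planeVal l (countPlanes n f k o) =
      ∑ i ∈ Ico o (o + (2 ^ k - 1)) with i < n, ((f i).testBit l).toNat := by
  induction k generalizing o with
  | zero => simp [countPlanes, planeVal]
  | succ k ih =>
    rw [countPlanes]
    by_cases ho : o < n
    · have hblt : Nat.blt o n = true := by simpa [Nat.blt_eq] using ho
      have hk := Nat.two_pow_pos k
      have hmid : o + 1 + (2 ^ k - 1) = o + 2 ^ k := by lia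
      have hend : o + 2 ^ k + (2 ^ k - 1) = o + (2 ^ (k + 1) - 1) := by rw [pow_succ]; lia
      rw [hblt, cond_true,
        planeVal_addPlanes _ _ ((length_countPlanes ..).trans (length_countPlanes ..).symm), ih, ih,
        hmid, hend, sum_filter, sum_filter, sum_filter, add_assoc,
        sum_Ico_consecutive _ (by lia) (by lia),
        sum_eq_sum_Ico_succ_bot (a := o) (by lia), if_pos ho]
    · have hblt : Nat.blt o n = false := by
        simpa [← Bool.not_eq_true, Nat.blt_eq] using ho
      rw [hblt, cond_false, planeVal_replicate_zero, filter_false_of_mem, sum_empty]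
      intro i hi
      have := (mem_Ico.1 hi).1
      lia

lemma histSum_eq {e m : ℕ} (he₅ : 5 ≤ e) (he : e < 32) (f : ℕ → ℕ) (ps : List ℕ)
    (hm : m < 2 ^ 2 ^ e) :
    histSum e f ps m = ∑ l ∈ range (2 ^ e) with m.testBit l, f (planeVal l ps) := by
  induction ps generalizing f m with
  | nil =>
    have hsum : ∑ l ∈ range (2 ^ e) with m.testBit l, f (planeVal l []) = f 0 * popCount e m := by
      simp only [popCount_eq he₅ he hm, planeVal, sum_const, card_filter, smul_eq_mul,
        Bool.toNat, Bool.cond_eq_ite, mul_comm]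
    rw [hsum, histSum]
    cases hf : f 0 == 0
    · rfl
    · rw [beq_iff_eq.1 hf, zero_mul, cond_true]
  | cons p ps ih =>
    by_cases hm₀ : m = 0
    · simp [histSum, hm₀]
    have hland : m.land p < 2 ^ 2 ^ e := Nat.and_le_left.trans_lt hm
    have hxor : m.xor (m.land p) < 2 ^ 2 ^ e := Nat.xor_lt_two_pow hm hland
    have hrec : histSum e f (p :: ps) m = histSum e (fun v => f (2 * v + 1)) ps (m.land p) +
        histSum e (fun v => f (2 * v)) ps (m.xor (m.land p)) := by
      rw [histSum, beq_false_of_ne hm₀, cond_false]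
    have hbit (l : ℕ) : (m.land p).testBit l = (m.testBit l && p.testBit l) := Nat.testBit_and ..
    have hbit' (l : ℕ) : (m.xor (m.land p)).testBit l = (m.testBit l && !p.testBit l) :=
      (Nat.testBit_xor ..).trans (by rw [hbit]; cases m.testBit l <;> simp)
    rw [hrec, ih _ hland, ih _ hxor, sum_filter, sum_filter, sum_filter,
      ← sum_add_distrib]
    refine sum_congr rfl fun l _ => ?_
    rw [hbit, hbit', planeVal]
    cases m.testBit l <;> cases p.testBit l <;> simp [add_comm]

variable {F : Type*} [Field F] {ω : F}

lemma word_apply_eq_zero_iff [CharP F 2] (hω : ω ^ 2 = ω + 1) {n w : ℕ} (i : Fin n) :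
    word ω n w i = 0 ↔ w.testBit i = false ∧ w.testBit (n + i) = false := by
  have hω₀ : ω ≠ 0 := by rintro rfl; simp at hω
  have hω₁ : 1 + ω ≠ 0 := by
    rw [add_comm, ← hω]
    exact pow_ne_zero 2 hω₀
  cases h : w.testBit i <;> cases h' : w.testBit (n + i) <;> simp [word, ofBit, h, h', hω₀, hω₁]

/-- The sum of `g` of the Hamming weight over all words encoded by `w ^^^ comb bs l`. The seven bit
planes hold weights up to `127`. -/
def cosetEval (n : ℕ) (bs : List ℕ) (g : ℕ → ℕ) (w : ℕ) : ℕ :=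
  histSum bs.length g (countPlanes n (nonzeroLane n bs w) 7 0) (ones bs.length)

lemma cosetEval_eq [CharP F 2] (hω : ω ^ 2 = ω + 1) {n : ℕ} (hn : n ≤ 127) {bs : List ℕ}
    (h₅ : 5 ≤ bs.length) (h : bs.length < 32) (g : ℕ → ℕ) (w : ℕ) :
    cosetEval n bs g w =
      ∑ l ∈ range (2 ^ bs.length), g (hammingNorm (word ω n (w ^^^ comb bs l))) := by
  have hm : ones bs.length < 2 ^ 2 ^ bs.length := Nat.pred_lt (Nat.two_pow_pos _).ne'
  rw [cosetEval, histSum_eq h₅ h _ _ hm, filter_true_of_mem fun l hl => by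
    simpa [testBit_ones] using hl]
  refine sum_congr rfl fun l hl => congrArg g ?_
  have hrange : {i ∈ Ico 0 (0 + (2 ^ 7 - 1)) | i < n} = range n := by
    ext i
    simp only [mem_filter, mem_Ico, mem_range]
    lia
  rw [planeVal_countPlanes, hrange, hammingNorm, card_filter, ← Fin.sum_univ_eq_sum_range
    (fun i => ((nonzeroLane n bs w i).testBit l).toNat)]
  refine sum_congr rfl fun i _ => ?_
  rw [testBit_nonzeroLane n w i (mem_range.1 hl)]
  simp only [ne_eq, word_apply_eq_zero_iff hω]
  cases (w ^^^ comb bs l).testBit i <;> cases (w ^^^ comb bs l).testBit (n + i) <;> simp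

end Evaluator

section Symmetry

variable {F : Type*} [Field F] {ω : F} {n : ℕ}

/-- The encoding `b'` represents the word `b` with its coordinates pulled back along `π`. -/
def IsPullback (π : Fin n → Fin n) (b b' : ℕ) : Prop :=
  ∀ i : Fin n, b'.testBit i = b.testBit (π i) ∧ b'.testBit (n + i) = b.testBit (n + π i)

instance (π : Fin n → Fin n) : DecidableRel (IsPullback π) :=
  fun _ _ => Fintype.decidableForallFintype

lemma IsPullback.word_eq {π : Fin n → Fin n} {b b' : ℕ} (h : IsPullback π b b') :
    word ω n b' = LinearMap.funLeft F F π (word ω n b) := by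
  ext i
  simp only [word, h i, LinearMap.funLeft_apply]

lemma hammingNorm_funLeft {ι : Type*} [Fintype ι] {π : ι → ι} (hπ : Function.Injective π)
    (v : ι → F) : hammingNorm (LinearMap.funLeft F F π v) = hammingNorm v := by
  rw [hammingNorm, hammingNorm, card_filter, card_filter]
  exact (Finite.injective_iff_bijective.1 hπ).sum_comp fun i => if v i ≠ 0 then 1 else 0

lemma cosetSum_smul_funLeft [Fintype F] {ι : Type*} [Fintype ι] [DecidableEq ι] {π : ι → ι}
    (hπ : Function.Injective π) {a : F} (ha : a ≠ 0) {E : Submodule F (ι → F)}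
    (hE : E ≤ E.comap (LinearMap.funLeft F F π)) (g : ℕ → ℕ) (v : ι → F) :
    cosetSum (fun u => g (hammingNorm u)) E (a • LinearMap.funLeft F F π v) =
      cosetSum (fun u => g (hammingNorm u)) E v :=
  cosetSum_map (σ := a • LinearMap.funLeft F F π)
    ((smul_right_injective _ ha).comp fun _ _ h =>
      LinearMap.funLeft_injective_of_surjective F F π
        (Finite.injective_iff_surjective.1 hπ) h)
    (fun u => congrArg g <| (hammingNorm_smul (fun _ => IsSMulRegular.of_ne_zero ha) _).trans
      (hammingNorm_funLeft hπ u))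
    (fun _ hv => E.smul_mem a (hE hv)) v

variable [CharP F 2]

lemma word_comb_mem {bs : List ℕ} {D : Submodule F (Fin n → F)} (h : ∀ b ∈ bs, word ω n b ∈ D)
    (k : ℕ) : word ω n (comb bs k) ∈ D := by
  induction bs with
  | nil => simp [comb, word_zero]
  | cons b bs ih =>
    obtain ⟨hb, hbs⟩ := List.forall_mem_cons.1 h
    cases hk : k.testBit bs.length <;> simp only [comb, hk, cond_true, cond_false, word_xor]
    exacts [ih hbs, D.add_mem hb (ih hbs)]

lemma word_comb_doubled_mem (hω : ω ^ 2 = ω + 1) (bs : List ℕ) (k : ℕ) :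
    word ω n (comb (doubled n bs) k) ∈ wordSpan ω n bs := by
  refine word_comb_mem (fun b hb => ?_) k
  obtain ⟨c, hc, hb⟩ := List.mem_flatMap.1 hb
  have hmem : word ω n c ∈ wordSpan ω n bs := Submodule.subset_span ⟨c, hc, rfl⟩
  obtain rfl | rfl : b = c ∨ b = mulOmega n c := by simpa using hb
  exacts [hmem, word_mulOmega hω c ▸ Submodule.smul_mem _ ω hmem]

lemma word_comb_map {σ : (Fin n → F) →ₗ[F] Fin n → F} {bs cs : List ℕ}
    (h : List.Forall₂ (fun b c => word ω n c = σ (word ω n b)) bs cs) (k : ℕ) :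
    word ω n (comb cs k) = σ (word ω n (comb bs k)) := by
  induction h with
  | nil => simp [comb, word_zero]
  | cons hbc h ih =>
    simp only [comb, h.length_eq]
    cases k.testBit _ <;> simp [word_xor, hbc, ih]

lemma comb_map_comb (bs js : List ℕ) (k : ℕ) :
    comb (js.map (comb bs)) k = comb bs (comb js k) := by
  induction js with
  | nil => simpa [comb, eq_comm] using comb_xor bs 0 0
  | cons j js ih =>
    simp only [comb, List.map_cons, List.length_map, ih]
    cases k.testBit js.length <;> simp [comb_xor]

lemma wordSpan_le_comap (hω : ω ^ 2 = ω + 1) {π : Fin n → Fin n} {bs js : List ℕ}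
    (h : ∀ b ∈ bs, ∃ j ∈ js, IsPullback π b (comb (doubled n bs) j)) :
    wordSpan ω n bs ≤ (wordSpan ω n bs).comap (LinearMap.funLeft F F π) := by
  refine Submodule.span_le.2 ?_
  rintro _ ⟨b, hb, rfl⟩
  obtain ⟨j, -, hj⟩ := h b hb
  rw [SetLike.mem_coe, Submodule.mem_comap, ← hj.word_eq]
  exact word_comb_doubled_mem hω bs j

end Symmetry
section Orbits

/-- The grid of the indices `σ^i (τ^j rep)` with `i < width` and `j < height`, for given maps `σ`
and `τ`: an orbit of the group they generate, in the cases below. -/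
structure Orbit where
  rep : ℕ
  width : ℕ
  height : ℕ

/-- The entries of the grid, listed row by row. -/
def Orbit.indices (σ τ : ℕ → ℕ) (o : Orbit) : List ℕ :=
  (List.iterate τ o.rep o.height).flatMap fun k => List.iterate σ k o.width

/-- The number whose bits are set at the positions in `l`. -/
def bitmask (l : List ℕ) : ℕ := l.foldr (fun k m => 1 <<< k ||| m) 0

lemma mem_of_testBit_bitmask {l : List ℕ} {k : ℕ} (h : (bitmask l).testBit k = true) : k ∈ l := by
  induction l with
  | nil => simp [bitmask] at h
  | cons a l ih =>
    have h' : (1 <<< a ||| bitmask l).testBit k = true := h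
    rw [Nat.testBit_or, Bool.or_eq_true, Nat.one_shiftLeft, Nat.testBit_two_pow,
      decide_eq_true_iff] at h'
    exact h'.elim (fun hk => hk ▸ List.mem_cons_self) fun hk => List.mem_cons_of_mem a (ih hk)

lemma sum_map_indices {σ τ : ℕ → ℕ} {H : ℕ → ℕ} (hσ : ∀ k, H (σ k) = H k)
    (hτ : ∀ k, H (τ k) = H k) (o : Orbit) :
    ((o.indices σ τ).map H).sum = o.width * o.height * H o.rep := by
  have iterate_eq {ρ : ℕ → ℕ} (hρ : ∀ k, H (ρ k) = H k) (m k : ℕ) : H (ρ^[m] k) = H k := by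
    induction m with
    | zero => rfl
    | succ m ih => rw [Function.iterate_succ_apply', hρ, ih]
  have hconst : ∀ x ∈ (o.indices σ τ).map H, x = H o.rep := by
    intro x hx
    obtain ⟨k, hk, rfl⟩ := List.mem_map.1 hx
    obtain ⟨l, hl, hk⟩ := List.mem_flatMap.1 hk
    obtain ⟨j, -, rfl⟩ := List.mem_iterate.1 hl
    obtain ⟨i, -, rfl⟩ := List.mem_iterate.1 hk
    rw [iterate_eq hσ, iterate_eq hτ]
  rw [List.sum_eq_card_nsmul _ _ hconst]
  simp [Orbit.indices, mul_comm]

lemma sum_wordSpan_le_of_orbits {F : Type*} [Field F] [Fintype F] [CharP F 2] {ω : F}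
    (hω : ω ^ 2 = ω + 1) (hF : ∀ x : F, ∃ a b, x = ofBit F a + ofBit F b * ω) {n : ℕ}
    {bs : List ℕ} {σ τ : ℕ → ℕ} {os : List Orbit}
    (hos : bitmask (os.flatMap (Orbit.indices σ τ)) = 2 ^ 2 ^ (doubled n bs).length - 1)
    {G : (Fin n → F) → ℕ}
    (hσ : ∀ k, G (word ω n (comb (doubled n bs) (σ k))) = G (word ω n (comb (doubled n bs) k)))
    (hτ : ∀ k, G (word ω n (comb (doubled n bs) (τ k))) = G (word ω n (comb (doubled n bs) k))) :
    ∑ v : wordSpan ω n bs, G v ≤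
      (os.map fun o => o.width * o.height * G (word ω n (comb (doubled n bs) o.rep))).sum := by
  have hcover : ∀ k < 2 ^ (doubled n bs).length, k ∈ os.flatMap (Orbit.indices σ τ) :=
    fun k hk => mem_of_testBit_bitmask (by rw [hos, Nat.testBit_two_pow_sub_one]; simpa using hk)
  refine (sum_wordSpan_le hω hF hcover G).trans_eq ?_
  rw [List.map_flatMap, List.flatMap, List.sum_flatten, List.map_map]
  exact congrArg List.sum (List.map_congr_left fun o _ => sum_map_indices hσ hτ o)

end Orbits
section Pairing

variable {F : Type*} [Field F] [CharP F 2] {ω : F} {n : ℕ}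

/-- The parity of the number of ones among the first `n` binary digits of `x`. -/
def parity : ℕ → ℕ → Bool
  | 0, _ => false
  | n + 1, x => parity n x ^^ x.testBit n

lemma ofBit_parity (n x : ℕ) : ofBit F (parity n x) = ∑ i : Fin n, ofBit F (x.testBit i) := by
  induction n with
  | zero => simp [parity, ofBit]
  | succ n ih => simp [parity, ofBit_xor, ih, Fin.sum_univ_castSucc]

/-- The coefficients of `1` and `ω` in the dot product of two encoded words. -/
def dotBits (n w w' : ℕ) : Bool × Bool :=
  (parity n (w &&& w' ^^^ w >>> n &&& w' >>> n),
    parity n (w &&& w' >>> n ^^^ w >>> n &&& w' ^^^ w >>> n &&& w' >>> n))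

lemma word_dotProduct_word (hω : ω ^ 2 = ω + 1) (w w' : ℕ) :
    word ω n w ⬝ᵥ word ω n w' =
      ofBit F (dotBits n w w').1 + ofBit F (dotBits n w w').2 * ω := by
  simp only [dotBits, ofBit_parity, sum_mul, ← sum_add_distrib, dotProduct, word, Nat.testBit_xor,
    Nat.testBit_and, Nat.testBit_shiftRight, ofBit_xor, ofBit_and]
  refine sum_congr rfl fun i _ => ?_
  linear_combination ofBit F (w.testBit (n + i)) * ofBit F (w'.testBit (n + i)) * hω

/-- The encoding of the entrywise square of the word encoded by `w`. -/
def squareWord (n w : ℕ) : ℕ := w ^^^ (w >>> n) % 2 ^ n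

lemma word_squareWord (hω : ω ^ 2 = ω + 1) (w : ℕ) :
    word ω n (squareWord n w) = word ω n w ^ 2 := by
  have ofBit_sq (b : Bool) : ofBit F b ^ 2 = ofBit F b := by cases b <;> simp [ofBit]
  ext i
  have hlo : (squareWord n w).testBit i = (w.testBit i ^^ w.testBit (n + i)) := by
    simp [squareWord]
  have hhi : (squareWord n w).testBit (n + i) = w.testBit (n + i) := by
    simp [squareWord]
  simp only [word, Pi.pow_apply, hlo, hhi, ofBit_xor, CharTwo.add_sq, mul_pow, ofBit_sq, hω]
  ring

lemma finrank_wordSpan (hω : ω ^ 2 = ω + 1) {bs : List ℕ} {us : ℕ → ℕ}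
    (h : ∀ i j : Fin bs.length, dotBits n (us i) bs[j] = (decide (i = j), false)) :
    finrank F (wordSpan ω n bs) = bs.length := by
  have hpair (i j : Fin bs.length) :
      word ω n (us i) ⬝ᵥ word ω n bs[j] = ofBit F (decide (i = j)) := by
    rw [word_dotProduct_word hω, h i j]
    simp [ofBit]
  have hindep : LinearIndependent F fun i : Fin bs.length => word ω n bs[i] :=
    .of_pairwise_dual_eq_zero_one _ (fun i => dotProductBilin F F (word ω n (us i)))
      (fun i j hij => (hpair i j).trans (by simp [hij, ofBit]))
      fun i => (hpair i i).trans (by simp [ofBit])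
  have hrange : word ω n '' {b | b ∈ bs} = Set.range fun i : Fin bs.length => word ω n bs[i] := by
    ext v
    simp [List.mem_iff_get, Fin.exists_iff]
  rw [wordSpan, hrange, finrank_span_eq_card hindep, Fintype.card_fin]

end Pairing
section FourElements

variable {F : Type*} [Field F]

lemma exists_basis_of_card_eq_four [Fintype F] [CharP F 2] (hF : Fintype.card F = 4) :
    ∃ ω : F, ω ^ 2 = ω + 1 ∧ ∀ x : F, ∃ a b, x = ofBit F a + ofBit F b * ω := by
  have hquad {x : F} (h₀ : x ≠ 0) (h₁ : x ≠ 1) : x ^ 2 = x + 1 := by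
    have hx : x ^ 4 = x := hF ▸ FiniteField.pow_card x
    have hfac : x * ((x - 1) * (x ^ 2 + x + 1)) = 0 := by linear_combination hx
    have hroot := ((mul_eq_zero.1 hfac).resolve_left h₀ |> mul_eq_zero.1).resolve_left
      (sub_ne_zero.2 h₁)
    rw [← CharTwo.neg_eq (x + 1)]
    linear_combination hroot
  obtain ⟨ω, hω⟩ : ∃ ω : F, ω ∉ ({0, 1} : Finset F) := by
    by_contra! h
    have := card_le_card (fun x _ => h x : (univ : Finset F) ⊆ {0, 1})
    have := card_le_two (a := (0 : F)) (b := 1)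
    simp_all
  obtain ⟨hω₀, hω₁⟩ : ω ≠ 0 ∧ ω ≠ 1 := by simpa using hω
  refine ⟨ω, hquad hω₀ hω₁, fun x => ?_⟩
  by_cases h₀ : x = 0
  · exact ⟨false, false, by simp [h₀, ofBit]⟩
  by_cases h₁ : x = 1
  · exact ⟨true, false, by simp [h₁, ofBit]⟩
  have hfac : (x - ω) * (x - (1 + ω)) = 0 := by
    linear_combination hquad h₀ h₁ + hquad hω₀ hω₁ + (ω + 1 - ω * x) * CharTwo.two_eq_zero (R := F)
  obtain h | h := mul_eq_zero.1 hfac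
  · exact ⟨false, true, by simp [sub_eq_zero.1 h, ofBit]⟩
  · exact ⟨true, true, by simp [sub_eq_zero.1 h, ofBit]⟩

end FourElements

section Data

/-- The permutation of the `78` coordinates given by `i ↦ m * i + d₀` on the first and
`i ↦ m * i + d₁` on the second block of length `39`, with indices read modulo `39`. -/
def affineBlock (m d₀ d₁ : ℕ) (i : Fin 78) : Fin 78 :=
  if i.1 < 39 then ⟨(m * i + d₀) % 39, by lia⟩ else ⟨39 + (m * i + d₁) % 39, by lia⟩

/-- The coordinate map of the quasi-cyclic shift. -/
abbrev quasiShift : Fin 78 → Fin 78 := affineBlock 1 38 38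

/-- The coordinate map of the thirteenth power of the quasi-cyclic shift. -/
abbrev cubeRootShift : Fin 78 → Fin 78 := affineBlock 1 26 26

/-- The coordinate map of the multiplier `16`, composed with a shift of the second block. -/
abbrev multiplier : Fin 78 → Fin 78 := affineBlock 16 0 13

/-- Six generators of `D`, successive quasi-cyclic shifts of one word fixed by `cubeRootShift`. -/
def rowsA : List ℕ :=
  [0x9504a8255a10d08684085842c21641460a3051, 0x12a09504a9421a10d0850b085842c028c1460a3,
   0x25412a0950843421a10e1610b0858051828c146, 0x4a825412a108684342182c21610b08a3051828c,
   0x9504a8254010d08684345842c21611460a30518, 0x2a09504a8221a10d0868b085842c228c1460a30]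

/-- Three generators of `D`, successive quasi-cyclic shifts of one word which `cubeRootShift`
multiplies by `ω`. -/
def rowsB : List ℕ :=
  [0xc20403509a87148085c109b84080685c10e2901, 0x840806a1370e29010b8213708100d0b821c5202,
   0x8100d426e1c5202170426e10201a970438a404]

/-- Ten further generators of `D`: six from the `ω²`-eigenspace of `cubeRootShift`, the word
`(1, …, 1, ω², …, ω²)`, and the next three shifts of the word generating `rowsB`. -/
def rowsE : List ℕ :=
  [0x404a3841d1021d90ac011c20e8404ec85601021, 0x80947083a0043b2158063841d0809590ac02043,
   0x128e10742087642b0087083a1012b215804087, 0x251c20e8410ec856010e10742025642b00810e,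
   0x4a3841d0821d90ac021c20e8404a485601021d, 0x947083a1043b2158043841d0809410ac02043b,
   0xfffffffffe0000000003fffffffffffffffffff, 0x10201a84dc38a4042e084dc2040352e08714808,
   0x20403509b87148085c109b840806a5c10e29010, 0x40806a1370e29010b8213708100d43821c52021]

/-- A basis of the Euclidean dual `D` of the code, in the encoding of `word`. -/
def rows : List ℕ := rowsA ++ (rowsB ++ rowsE)

/-- Words on the first `19` coordinates whose dot products with `rows` form the identity matrix. -/
def dualRows : List ℕ :=
  [0x1aabe4000000000000006372a, 0x103860000000000000000bd48, 0x99754000000000000002c54c,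
   0xbf200000000000000005174b, 0x191b70000000000000003e8af, 0x19a638000000000000002c47b,
   0x124b8800000000000000541ed, 0x4c3c800000000000000468dd, 0x778e00000000000000011783,
   0xda73c0000000000000063d32, 0x181634000000000000003816f, 0x19cbfc000000000000004bd02,
   0x1dce80000000000000006a2e, 0x3b9d0000000000000000d45c, 0x122054000000000000002c177,
   0x18a28c0000000000000016ab4, 0x9bdfc000000000000006bde4, 0x1d8488000000000000004bdf1,
   0xe5a7c00000000000000643ea]

/-- A word of weight `9` in the dual of the span of `rows`. -/
def lightWord : ℕ := 0x9400080000002000000060103000000200000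

/-- The images of the doubled `rowsA` under `ω` times the quasi-cyclic shift, as indices for
`comb`. -/
def shiftIndicesA : List ℕ :=
  [256, 768, 64, 192, 16, 48, 4, 12, 1, 3, 1827, 3602]

/-- The images of the doubled `rowsA` under the multiplier, as indices for `comb`. -/
def multiplierIndicesA : List ℕ :=
  [12, 8, 3072, 2048, 2130, 1265, 3, 2, 768, 512, 2853, 1567]

/-- The images of the doubled `rowsB` under `cubeRootShift`, as indices for `comb`. -/
def cubeRootIndicesB : List ℕ :=
  [16, 48, 4, 12, 1, 3]

/-- The images of `rowsE` under `cubeRootShift`, as indices for `comb` in the doubled `rowsE`. -/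
def cubeRootIndicesE : List ℕ :=
  [786432, 196608, 49152, 12288, 3072, 768, 128, 16, 4, 1]

/-- The images of `rowsB ++ rowsE` under the quasi-cyclic shift, as indices for `comb`. -/
def shiftIndicesBE : List ℕ :=
  [8388608, 2097152, 32, 131072, 32768, 8192, 2048, 512, 659712, 128, 8, 2, 37748754]

/-- The images of `rowsB ++ rowsE` under the multiplier, as indices for `comb`. -/
def multiplierIndicesBE : List ℕ :=
  [3145728, 48234523, 56623147, 625152, 3072, 524288, 320000, 512, 65536, 128, 16, 17825802,
   27262990]

/-- The orbits of the span of `rowsB` under multiplication by `ω`, which is the action of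
`cubeRootShift`. -/
def orbitsB : List Orbit :=
  ⟨0, 1, 1⟩ :: ⟨2, 3, 1⟩ :: (List.range' 8 4 ++ List.range' 32 16).map fun k => ⟨k, 3, 1⟩

/-- The orbits of the span of `rowsA` under `ω` times the quasi-cyclic shift and the multiplier,
with the value of `moment` on each of them. -/
def momentTable : List (Orbit × ℕ) :=
  [(⟨0, 1, 1⟩, 24035469898752), (⟨1, 39, 1⟩, 24009030816768), (⟨5, 39, 3⟩, 24009735214080),
   (⟨6, 39, 3⟩, 24009638949888), (⟨7, 39, 3⟩, 24009777435648), (⟨17, 39, 3⟩, 24009329144832),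
   (⟨18, 39, 3⟩, 24009899455488), (⟨19, 39, 3⟩, 24009464755200), (⟨21, 39, 3⟩, 24009472152576),
   (⟨22, 39, 3⟩, 24009951482880), (⟨23, 39, 3⟩, 24010193138688), (⟨26, 39, 3⟩, 24009892647936),
   (⟨27, 39, 3⟩, 24009473577984), (⟨29, 39, 3⟩, 24009872987136), (⟨30, 39, 3⟩, 24009289602048),
   (⟨31, 39, 3⟩, 24009547084800), (⟨70, 39, 3⟩, 24009406239744), (⟨71, 39, 1⟩, 24009306633216),
   (⟨73, 39, 3⟩, 24009636172800), (⟨77, 39, 3⟩, 24009959150592), (⟨78, 39, 3⟩, 24009579156480),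
   (⟨87, 39, 3⟩, 24009498670080), (⟨91, 39, 1⟩, 24010550227968), (⟨93, 39, 1⟩, 24008905847808),
   (⟨97, 39, 3⟩, 24010360255488), (⟨98, 39, 1⟩, 24008625017856), (⟨99, 39, 3⟩, 24009744380928),
   (⟨105, 39, 3⟩, 24009195181056), (⟨106, 39, 3⟩, 24009124918272), (⟨107, 39, 3⟩, 24009320420352),
   (⟨122, 39, 1⟩, 24010145387520), (⟨125, 39, 3⟩, 24009691395072), (⟨126, 39, 3⟩, 24009703830528),
   (⟨261, 39, 1⟩, 24009272423424), (⟨270, 39, 1⟩, 24009135141888), (⟨274, 39, 3⟩, 24009371292672),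
   (⟨275, 39, 3⟩, 24009444529152), (⟨281, 39, 1⟩, 24010259813376), (⟨286, 39, 1⟩, 24009541088256),
   (⟨290, 39, 3⟩, 24009721033728), (⟨294, 39, 1⟩, 24009000440832), (⟨307, 39, 3⟩, 24009468736512),
   (⟨321, 39, 1⟩, 24009347331072), (⟨354, 39, 1⟩, 24009677116416), (⟨401, 39, 1⟩, 24009161315328),
   (⟨427, 39, 1⟩, 24009768244224)]

end Data

section SumOverCode

/-- The sum of `(78 - wt).choose 8` over the coset of the span of `rowsB ++ rowsE` through the
`r`-th word of the span of `rowsA`, from the orbits of `orbitsB`. -/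
def moment (r : ℕ) : ℕ :=
  (orbitsB.map fun o => o.width * o.height *
    cosetEval 78 (doubled 78 rowsE) (fun w => (78 - w).choose 8)
      (comb (doubled 78 rowsA) r ^^^ comb (doubled 78 rowsB) o.rep)).sum

lemma quasiShift_injective : Function.Injective quasiShift := by decide +kernel

lemma cubeRootShift_injective : Function.Injective cubeRootShift := by decide +kernel

lemma multiplier_injective : Function.Injective multiplier := by decide +kernel

variable {F : Type*} [Field F] [CharP F 2] {ω : F}

lemma word_comb_comb {n : ℕ} {π : Fin n → Fin n} {a : F} {m : ℕ → ℕ}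
    (hm : ∀ b, word ω n (m b) = a • word ω n b) {bs js : List ℕ}
    (h : List.Forall₂ (fun b c => IsPullback π (m b) c) bs (js.map (comb bs))) (k : ℕ) :
    word ω n (comb bs (comb js k)) = a • LinearMap.funLeft F F π (word ω n (comb bs k)) := by
  rw [← comb_map_comb]
  refine word_comb_map (σ := a • LinearMap.funLeft F F π) (h.imp fun b c hbc => ?_) k
  rw [hbc.word_eq, hm, map_smul, LinearMap.smul_apply]

lemma funLeft_cubeRootShift_word_rowsA (k : ℕ) :
    LinearMap.funLeft F F cubeRootShift (word ω 78 (comb (doubled 78 rowsA) k)) =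
      word ω 78 (comb (doubled 78 rowsA) k) := by
  have hfix : List.Forall₂ (IsPullback cubeRootShift) (doubled 78 rowsA) (doubled 78 rowsA) := by
    decide +kernel
  exact (word_comb_map (hfix.imp fun b c h => h.word_eq) k).symm

lemma word_rowsB_comb_cubeRootIndices (k : ℕ) :
    word ω 78 (comb (doubled 78 rowsB) (comb cubeRootIndicesB k)) =
      LinearMap.funLeft F F cubeRootShift (word ω 78 (comb (doubled 78 rowsB) k)) := by
  simpa using word_comb_comb (ω := ω) (a := 1) (m := id) (by simp) (by decide +kernel) k

lemma wordSpan_rowsE_le_comap (hω : ω ^ 2 = ω + 1) :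
    wordSpan ω 78 rowsE ≤ (wordSpan ω 78 rowsE).comap (LinearMap.funLeft F F cubeRootShift) :=
  wordSpan_le_comap hω (js := cubeRootIndicesE) (by decide +kernel)

variable [Fintype F]

lemma cosetSum_word_le_cosetEval (hω : ω ^ 2 = ω + 1)
    (hF : ∀ x : F, ∃ a b, x = ofBit F a + ofBit F b * ω) {n : ℕ} (hn : n ≤ 127) {bs : List ℕ}
    (h₅ : 5 ≤ (doubled n bs).length) (h : (doubled n bs).length < 32) (g : ℕ → ℕ) (w : ℕ) :
    cosetSum (fun u => g (hammingNorm u)) (wordSpan ω n bs) (word ω n w) ≤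
      cosetEval n (doubled n bs) g w := by
  rw [cosetEval_eq hω hn h₅ h]
  refine (sum_wordSpan_le hω hF (K := List.range (2 ^ (doubled n bs).length)) (by simp)
    fun v => g (hammingNorm (word ω n w + v))).trans_eq ?_
  simp only [word_xor]
  rfl

/-- The number of eight-element sets of coordinates at which `u` vanishes. -/
def zeroOctets (u : Fin 78 → F) : ℕ := (78 - hammingNorm u).choose 8

lemma cosetSum_rowsB_sup_le_moment (hω : ω ^ 2 = ω + 1)
    (hF : ∀ x : F, ∃ a b, x = ofBit F a + ofBit F b * ω) (r : ℕ) :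
    cosetSum zeroOctets (wordSpan ω 78 rowsB ⊔ wordSpan ω 78 rowsE)
      (word ω 78 (comb (doubled 78 rowsA) r)) ≤ moment r := by
  set x := word ω 78 (comb (doubled 78 rowsA) r) with hx
  have hshift (k : ℕ) : cosetSum zeroOctets (wordSpan ω 78 rowsE)
        (x + word ω 78 (comb (doubled 78 rowsB) (comb cubeRootIndicesB k))) =
      cosetSum zeroOctets (wordSpan ω 78 rowsE) (x + word ω 78 (comb (doubled 78 rowsB) k)) := by
    rw [word_rowsB_comb_cubeRootIndices, hx, ← funLeft_cubeRootShift_word_rowsA, ← map_add,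
      ← one_smul F (LinearMap.funLeft F F cubeRootShift _), funLeft_cubeRootShift_word_rowsA]
    exact cosetSum_smul_funLeft cubeRootShift_injective one_ne_zero (wordSpan_rowsE_le_comap hω)
      (fun w => (78 - w).choose 8) _
  calc cosetSum zeroOctets (wordSpan ω 78 rowsB ⊔ wordSpan ω 78 rowsE) x
      ≤ ∑ v : wordSpan ω 78 rowsB, cosetSum zeroOctets (wordSpan ω 78 rowsE) (x + v) :=
        cosetSum_sup_le ..
    _ ≤ (orbitsB.map fun o => o.width * o.height * cosetSum zeroOctets (wordSpan ω 78 rowsE)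
          (x + word ω 78 (comb (doubled 78 rowsB) o.rep))).sum :=
        sum_wordSpan_le_of_orbits hω hF (τ := id)
          (G := fun v => cosetSum zeroOctets (wordSpan ω 78 rowsE) (x + v)) (by decide +kernel)
          hshift fun _ => rfl
    _ ≤ moment r := List.sum_le_sum fun o _ => Nat.mul_le_mul_left _ <| by
        rw [hx, ← word_xor]
        exact cosetSum_word_le_cosetEval hω hF (n := 78) (bs := rowsE) (by decide) (by decide)
          (by decide) (fun w => (78 - w).choose 8) _

lemma cosetSum_word_rowsA_comb (hω : ω ^ 2 = ω + 1) {π : Fin 78 → Fin 78}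
    (hπ : Function.Injective π) {a : F} (ha : a ≠ 0) {m : ℕ → ℕ}
    (hm : ∀ b, word ω 78 (m b) = a • word ω 78 b) {js ks : List ℕ}
    (hA : List.Forall₂ (fun b c => IsPullback π (m b) c) (doubled 78 rowsA)
      (js.map (comb (doubled 78 rowsA))))
    (hBE : ∀ b ∈ rowsB ++ rowsE, ∃ k ∈ ks, IsPullback π b (comb (doubled 78 (rowsB ++ rowsE)) k))
    (k : ℕ) :
    cosetSum zeroOctets (wordSpan ω 78 (rowsB ++ rowsE))
        (word ω 78 (comb (doubled 78 rowsA) (comb js k))) =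
      cosetSum zeroOctets (wordSpan ω 78 (rowsB ++ rowsE))
        (word ω 78 (comb (doubled 78 rowsA) k)) := by
  rw [word_comb_comb hm hA]
  exact cosetSum_smul_funLeft hπ ha (wordSpan_le_comap hω hBE) (fun w => (78 - w).choose 8) _

lemma sum_zeroOctets_le_sum_moment (hω : ω ^ 2 = ω + 1)
    (hF : ∀ x : F, ∃ a b, x = ofBit F a + ofBit F b * ω) :
    ∑ c : wordSpan ω 78 rows, zeroOctets (c : Fin 78 → F) ≤
      (momentTable.map fun o => o.1.width * o.1.height * moment o.1.rep).sum := by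
  have hω₀ : ω ≠ 0 := by rintro rfl; simp at hω
  have hshift := cosetSum_word_rowsA_comb hω quasiShift_injective hω₀ (word_mulOmega hω)
    (js := shiftIndicesA) (ks := shiftIndicesBE) (by decide +kernel) (by decide +kernel)
  have hmult := cosetSum_word_rowsA_comb hω multiplier_injective one_ne_zero (m := id) (by simp)
    (js := multiplierIndicesA) (ks := multiplierIndicesBE) (by decide +kernel) (by decide +kernel)
  calc ∑ c : wordSpan ω 78 rows, zeroOctets (c : Fin 78 → F)
      = cosetSum zeroOctets (wordSpan ω 78 rowsA ⊔ wordSpan ω 78 (rowsB ++ rowsE)) 0 := by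
        rw [← wordSpan_append]
        simp only [cosetSum, zero_add]
        rfl
    _ ≤ ∑ a : wordSpan ω 78 rowsA, cosetSum zeroOctets (wordSpan ω 78 (rowsB ++ rowsE)) a := by
        simpa only [zero_add] using cosetSum_sup_le zeroOctets (wordSpan ω 78 rowsA) _ 0
    _ ≤ ((momentTable.map Prod.fst).map fun o => o.width * o.height *
          cosetSum zeroOctets (wordSpan ω 78 (rowsB ++ rowsE))
            (word ω 78 (comb (doubled 78 rowsA) o.rep))).sum :=
        sum_wordSpan_le_of_orbits hω hF (by decide +kernel) hshift hmult
    _ ≤ (momentTable.map fun o => o.1.width * o.1.height * moment o.1.rep).sum := by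
        rw [List.map_map, wordSpan_append]
        exact List.sum_le_sum fun o _ =>
          Nat.mul_le_mul_left _ (cosetSum_rowsB_sup_le_moment hω hF o.1.rep)

end SumOverCode

section Certificate

set_option maxRecDepth 10000 in
lemma moment_eq_of_mem_momentTable : ∀ o ∈ momentTable, moment o.1.rep = o.2 := by
  simp only [momentTable, List.forall_mem_cons]
  and_intros
  -- One row at a time, so that the numbers of `2 ^ 20` digits of a row are freed before the next.
  iterate 46 decide +kernel
  exact List.forall_mem_nil _

lemma sum_moment_le :
    (momentTable.map fun o => o.1.width * o.1.height * moment o.1.rep).sum ≤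
      Nat.choose 78 8 * 4 ^ 11 := by
  calc (momentTable.map fun o => o.1.width * o.1.height * moment o.1.rep).sum
      = (momentTable.map fun o => o.1.width * o.1.height * o.2).sum :=
        congrArg List.sum <| List.map_congr_left fun o ho => by
          rw [moment_eq_of_mem_momentTable o ho]
    _ ≤ Nat.choose 78 8 * 4 ^ 11 := by decide +kernel

end Certificate

section Code

variable {F : Type*} [Field F] [CharP F 2] {ω : F}

lemma hammingNorm_word (hω : ω ^ 2 = ω + 1) (n w : ℕ) :
    hammingNorm (word ω n w) = #{i : Fin n | w.testBit i || w.testBit (n + i)} := by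
  rw [hammingNorm]
  congr 1
  ext i
  cases h : w.testBit i <;> simp [word_apply_eq_zero_iff hω, h]

lemma hammingNorm_word_lightWord (hω : ω ^ 2 = ω + 1) :
    hammingNorm (word ω 78 lightWord) = 9 := by
  rw [hammingNorm_word hω]
  decide +kernel

lemma finrank_wordSpan_rows (hω : ω ^ 2 = ω + 1) : finrank F (wordSpan ω 78 rows) = 19 :=
  finrank_wordSpan hω (us := fun i => dualRows.getD i 0) (by decide +kernel)

lemma word_lightWord_mem_dualCode (hω : ω ^ 2 = ω + 1) :
    word ω 78 lightWord ∈ dualCode (wordSpan ω 78 rows) := by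
  have hdot : ∀ b ∈ rows, dotBits 78 b lightWord = (false, false) := by decide +kernel
  refine span_le_dualCode_span ?_ (Submodule.mem_span_singleton_self _)
  rintro _ ⟨b, hb, rfl⟩ _ rfl
  simp [word_dotProduct_word hω, hdot b hb, ofBit]

lemma wordSpan_rows_le_hermDual {ω : F4} (hω : ω ^ 2 = ω + 1) :
    wordSpan ω 78 rows ≤ hermDual (wordSpan ω 78 rows) := by
  have hdot : ∀ b ∈ rows, ∀ c ∈ rows, dotBits 78 b (squareWord 78 c) = (false, false) := by
    decide +kernel
  refine span_le_hermDual_span ?_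
  rintro _ ⟨b, hb, rfl⟩ _ ⟨c, hc, rfl⟩
  simp [← word_squareWord hω, word_dotProduct_word hω, hdot b hb c hc, ofBit]

lemma nine_le_hammingNorm_of_mem_dualCode [Fintype F] (hF : Fintype.card F = 4)
    (hω : ω ^ 2 = ω + 1) (hspan : ∀ x : F, ∃ a b, x = ofBit F a + ofBit F b * ω)
    {u : Fin 78 → F} (hu : u ∈ dualCode (wordSpan ω 78 rows)) (hu₀ : u ≠ 0) :
    9 ≤ hammingNorm u := by
  refine lt_hammingNorm_of_sum_choose_le (D := wordSpan ω 78 rows) ?_ ?_ hu₀ (mem_dualCode.1 hu)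
  · rw [finrank_wordSpan_rows hω]
    decide
  · rw [finrank_wordSpan_rows hω, hF, Fintype.card_fin]
    exact (sum_zeroOctets_le_sum_moment hω hspan).trans sum_moment_le

end Code

end HammingMoment

/-- There exists a Hermitian dual-containing `[78, 59, 9]₄` code. -/
theorem exists_dual_containing_78_59_9 :
    ∃ Ccode : Submodule F4 (Fin 78 → F4),
      Module.finrank F4 ↥Ccode = 59 ∧
      (∀ u ∈ Ccode, u ≠ 0 → 9 ≤ hammingWt u) ∧
      (∃ u ∈ Ccode, u ≠ 0 ∧ hammingWt u = 9) ∧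
      hermDual Ccode ≤ Ccode := by
  classical
  have := Fintype.ofFinite F4
  have hcard : Fintype.card F4 = 4 := by
    rw [← Nat.card_eq_fintype_card, GaloisField.card 2 2 two_ne_zero]
    rfl
  obtain ⟨ω, hω, hspan⟩ := HammingMoment.exists_basis_of_card_eq_four hcard
  simp only [HammingMoment.hammingWt_eq_hammingNorm]
  have hlight := HammingMoment.hammingNorm_word_lightWord hω
  refine ⟨HammingMoment.dualCode (HammingMoment.wordSpan ω 78 HammingMoment.rows), ?_,
    fun u hu hu₀ => HammingMoment.nine_le_hammingNorm_of_mem_dualCode hcard hω hspan hu hu₀,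
    ⟨_, HammingMoment.word_lightWord_mem_dualCode hω, ?_, hlight⟩,
    HammingMoment.hermDual_dualCode_le (HammingMoment.wordSpan_rows_le_hermDual hω)⟩
  · rw [HammingMoment.finrank_dualCode, HammingMoment.finrank_wordSpan_rows hω, Fintype.card_fin]
  · rw [← hammingNorm_pos_iff, hlight]
    norm_num

end
end
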